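/- Let G be a graph and λ a positive integer with connectivity κ ≥ λ + 1. Then either the circumference satisfies c ≥ (λ+1)(δ−λ+1), or every longest cycle in G is a CD_{min{λ, δ−λ}}-cycle. -/

import Mathlib

open SimpleGraph

variable {V : Type*}

/-- `G` is `k`-connected: more than `k` vertices and removing fewer than `k`
vertices leaves a connected graph. -/
def KConnected (G : SimpleGraph V) [Fintype V] (k : ℕ) : Prop :=
  k < Fintype.card V ∧
    ∀ S : Finset V, S.card < k → (G.induce ((↑S : Set V)ᶜ)).Connected

/-- vertex connectivity `κ`. -/
noncomputable def connectivity (G : SimpleGraph V) [Fintype V] : ℕ :=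
  sSup {k | KConnected G k}

/-- independence number `α`. -/
noncomputable def indepNumber (G : SimpleGraph V) [Fintype V] : ℕ :=
  sSup {k | ∃ s : Finset V, (∀ u ∈ s, ∀ v ∈ s, ¬ G.Adj u v) ∧ s.card = k}

/-- circumference `c`: length of a longest cycle. -/
noncomputable def circumference (G : SimpleGraph V) [Fintype V] : ℕ :=
  sSup {n | ∃ (v : V) (w : G.Walk v v), w.IsCycle ∧ w.length = n}

/-- `w` is a longest cycle of `G`. -/
def IsLongestCycle {G : SimpleGraph V} {v : V} (w : G.Walk v v) : Prop :=
  w.IsCycle ∧ ∀ (u : V) (w' : G.Walk u u), w'.IsCycle → w'.length ≤ w.length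

/-- dominating cycle: every edge has an endpoint on the cycle. -/
def IsDominatingCycle {G : SimpleGraph V} {v : V} (w : G.Walk v v) : Prop :=
  w.IsCycle ∧ ∀ x y, G.Adj x y → x ∈ w.support ∨ y ∈ w.support

/-- generalized cycle of length `n` with vertex set `W`: single vertices are
cycles of length 1, edges are cycles of length 2. -/
def ExtCycle (G : SimpleGraph V) (W : Set V) (n : ℕ) : Prop :=
  (n = 1 ∧ ∃ v : V, W = {v}) ∨
  (n = 2 ∧ ∃ u v : V, G.Adj u v ∧ W = {u, v}) ∨
  (3 ≤ n ∧ ∃ (v : V) (w : G.Walk v v), w.IsCycle ∧ w.length = n ∧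
      W = {x | x ∈ w.support})

/-- `p̄`: the length of a longest path in `G \ C`. -/
noncomputable def pathBar (G : SimpleGraph V) [Fintype V] {v : V} (w : G.Walk v v) : ℕ :=
  sSup {n | ∃ (a b : {x : V | x ∉ w.support})
      (p : (G.induce {x : V | x ∉ w.support}).Walk a b), p.IsPath ∧ p.length = n}

/-- `c̄`: the length of a longest (generalized) cycle in `G \ C`. -/
noncomputable def cycBar (G : SimpleGraph V) [Fintype V] {v : V} (w : G.Walk v v) : ℕ :=
  sSup {n | ∃ W, ExtCycle (G.induce {x : V | x ∉ w.support}) W n}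

/-- `CD_m`-cycle: every (generalized) cycle of length at least `m` meets `w`. -/
def IsCDCycle (G : SimpleGraph V) {v : V} (w : G.Walk v v) (m : ℕ) : Prop :=
  w.IsCycle ∧ ∀ (W : Set V) (n : ℕ), ExtCycle G W n → m ≤ n → ∃ x ∈ W, x ∈ w.support

namespace NK
open scoped Classical

/-- `l` is a walk (as a vertex list) from `a` to `b`. -/
def P (G : SimpleGraph V) (a b : V) (l : List V) : Prop :=
  l.IsChain G.Adj ∧ l.head? = some a ∧ l.getLast? = some b

theorem P.ne_nil {G : SimpleGraph V} {a b : V} {l : List V} (h : P G a b l) : l ≠ [] := by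
  rintro rfl
  simp [P] at h

theorem P.single (G : SimpleGraph V) (a : V) : P G a a [a] := by simp [P]

theorem P.head_mem {G : SimpleGraph V} {a b : V} {l : List V} (h : P G a b l) : a ∈ l :=
  List.mem_of_mem_head? h.2.1

theorem P.last_mem {G : SimpleGraph V} {a b : V} {l : List V} (h : P G a b l) : b ∈ l :=
  List.mem_of_mem_getLast? h.2.2

theorem P.reverse {G : SimpleGraph V} {a b : V} {l : List V} (h : P G a b l) :
    P G b a l.reverse := by
  refine ⟨?_, ?_, ?_⟩
  · rw [List.isChain_reverse]
    exact h.1.imp fun x y hxy => hxy.symm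
  · simpa using h.2.2
  · simpa using h.2.1

theorem P.append {G : SimpleGraph V} {a b c d : V} {l m : List V} (h : P G a b l)
    (hbc : G.Adj b c) (h' : P G c d m) : P G a d (l ++ m) := by
  refine ⟨?_, ?_, ?_⟩
  · rw [List.isChain_append]
    refine ⟨h.1, h'.1, ?_⟩
    intro x hx y hy
    rw [h.2.2] at hx
    rw [h'.2.1] at hy
    simp at hx hy
    subst hx; subst hy
    exact hbc
  · rw [List.head?_append, h.2.1]; rfl
  · rw [List.getLast?_append, h'.2.2]; rfl

theorem P.cons {G : SimpleGraph V} {a c d : V} {m : List V}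
    (hbc : G.Adj a c) (h' : P G c d m) : P G a d (a :: m) :=
  (P.single G a).append hbc h'

theorem P.concat {G : SimpleGraph V} {a c d : V} {m : List V}
    (h' : P G a c m) (hbc : G.Adj c d) : P G a d (m ++ [d]) :=
  h'.append hbc (P.single G d)

theorem P.of_append {G : SimpleGraph V} {a d : V} {l m : List V} (h : P G a d (l ++ m))
    (hl : l ≠ []) (hm : m ≠ []) : ∃ b c, P G a b l ∧ G.Adj b c ∧ P G c d m := by
  obtain ⟨h1, h2, h3⟩ := h
  rw [List.isChain_append] at h1
  rw [List.head?_append_of_ne_nil _ hl] at h2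
  rw [List.getLast?_append_of_ne_nil _ hm] at h3
  refine ⟨l.getLast hl, m.head hm, ⟨h1.1, h2, List.getLast?_eq_getLast_of_ne_nil hl⟩, ?_,
    ⟨h1.2.1, List.head?_eq_some_head hm, h3⟩⟩
  apply h1.2.2
  · rw [List.getLast?_eq_getLast_of_ne_nil hl]; rfl
  · rw [List.head?_eq_some_head hm]; rfl

theorem P.eq_of_cons {G : SimpleGraph V} {a b x : V} {l : List V} (h : P G a b (x :: l)) :
    x = a := by
  have := h.2.1
  simpa using this

theorem P.eq_of_concat {G : SimpleGraph V} {a b x : V} {l : List V} (h : P G a b (l ++ [x])) :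
    x = b := by
  have := h.2.2
  simpa using this

theorem P.left {G : SimpleGraph V} {a b x : V} {l m : List V} (h : P G a b (l ++ x :: m)) :
    P G a x (l ++ [x]) := by
  rcases m with _ | ⟨y, m⟩
  · have := h.eq_of_concat
    subst this
    exact h
  · have h' : P G a b ((l ++ [x]) ++ (y :: m)) := by simpa using h
    obtain ⟨b, c, h1, -, -⟩ := h'.of_append (by simp) (by simp)
    have := h1.eq_of_concat
    subst this
    exact h1

theorem P.right {G : SimpleGraph V} {a b x : V} {l m : List V} (h : P G a b (l ++ x :: m)) :
    P G x b (x :: m) := by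
  rcases l with _ | ⟨y, l⟩
  · have h : P G a b (x :: m) := h
    have := h.eq_of_cons
    subst this
    exact h
  · obtain ⟨b, c, -, -, h1⟩ := h.of_append (by simp) (by simp)
    have := h1.eq_of_cons
    subst this
    exact h1

theorem P.join {G : SimpleGraph V} {a b x : V} {l m : List V} (h : P G a x (l ++ [x]))
    (h' : P G x b (x :: m)) : P G a b (l ++ x :: m) := by
  rcases m with _ | ⟨y, m⟩
  · have := h'.2.2
    simp at this
    subst this
    exact h
  · have h' : P G x b ([x] ++ (y :: m)) := h'
    obtain ⟨b, c, h1, h2, h3⟩ := h'.of_append (by simp) (by simp)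
    have := h1.2.2
    simp at this
    subst this
    have := h.append h2 h3
    simpa using this

theorem P.exists_last {G : SimpleGraph V} {a b : V} {l : List V} (h : P G a b l) :
    ∃ l', l = l' ++ [b] := by
  rcases List.eq_nil_or_concat l with h0 | ⟨l', x, rfl⟩
  · exact absurd h0 h.ne_nil
  · rw [List.concat_eq_append] at h ⊢
    rw [h.eq_of_concat]
    exact ⟨_, rfl⟩

theorem P.exists_head {G : SimpleGraph V} {a b : V} {l : List V} (h : P G a b l) :
    ∃ l', l = a :: l' := by
  rcases l with _ | ⟨x, l⟩
  · exact absurd rfl h.ne_nil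
  · rw [h.eq_of_cons]
    exact ⟨_, rfl⟩

theorem P.exists_both {G : SimpleGraph V} {a b : V} {l : List V} (h : P G a b l) (hab : a ≠ b) :
    ∃ l', l = a :: (l' ++ [b]) := by
  obtain ⟨l', rfl⟩ := h.exists_head
  rcases List.eq_nil_or_concat l' with rfl | ⟨l'', x, rfl⟩
  · have := h.2.2
    simp at this
    exact absurd this hab
  · have : P G a b ((a :: l'') ++ [x]) := by simpa using h
    rw [this.eq_of_concat]
    exact ⟨l'', by simp⟩

/-- composition of walks -/
theorem P.trans {G : SimpleGraph V} {a b c : V} {l m : List V} (h : P G a b l)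
    (h' : P G b c m) : ∃ k, P G a c k ∧ (∀ x ∈ k, x ∈ l ∨ x ∈ m) := by
  obtain ⟨l', rfl⟩ := h.exists_last
  obtain ⟨m', rfl⟩ := h'.exists_head
  refine ⟨_, h.join h', ?_⟩
  intro x hx
  simp at hx ⊢
  tauto

theorem P.mono_mem {G H : SimpleGraph V} {a b : V} {l : List V} (h : P G a b l)
    (hh : ∀ x ∈ l, ∀ y ∈ l, G.Adj x y → H.Adj x y) : P H a b l := by
  refine ⟨?_, h.2⟩
  have h1 := h.1
  clear h
  induction l with
  | nil => simp
  | cons x l ih =>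
    rcases l with _ | ⟨y, l⟩
    · simp
    · rw [List.isChain_cons_cons] at h1 ⊢
      refine ⟨hh x (by simp) y (by simp) h1.1, ih ?_ h1.2⟩
      intro u hu v hv
      exact hh u (List.mem_cons_of_mem _ hu) v (List.mem_cons_of_mem _ hv)

theorem P.extract {G : SimpleGraph V} {a b : V} {l : List V} (h : P G a b l) :
    ∃ m, P G a b m ∧ m.Nodup ∧ m ⊆ l ∧ m.length ≤ l.length := by
  induction hn : l.length using Nat.strong_induction_on generalizing l with
  | _ n ih =>
    by_cases hd : l.Nodup
    · exact ⟨l, h, hd, by simp, by omega⟩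
    · obtain ⟨x, hx⟩ : ∃ x, List.Duplicate x l := by
        rw [List.nodup_iff_forall_not_duplicate] at hd
        push Not at hd
        exact hd
      rw [List.duplicate_iff_two_le_count] at hx
      have hxl : x ∈ l := List.count_pos_iff.mp (by omega)
      obtain ⟨l1, l2, rfl⟩ := List.append_of_mem hxl
      have : x ∈ l1 ∨ x ∈ l2 := by
        by_contra hcon
        push Not at hcon
        simp [List.count_eq_zero_of_not_mem hcon.1, List.count_eq_zero_of_not_mem hcon.2] at hx
      rcases this with hx1 | hx2
      · obtain ⟨m1, m2, rfl⟩ := List.append_of_mem hx1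
        have h1 : P G a x (m1 ++ [x]) := by
          have h' : P G a b (m1 ++ x :: (m2 ++ x :: l2)) := by simpa using h
          exact h'.left
        have h2 := h.right
        obtain ⟨m, hm1, hm2, hm3, hm4⟩ := ih _ (by simp at hn ⊢; omega) (h1.join h2) rfl
        refine ⟨m, hm1, hm2, ?_, ?_⟩
        · intro y hy
          have := hm3 hy
          simp at this ⊢
          tauto
        · simp at hm4 hn ⊢; omega
      · obtain ⟨m1, m2, rfl⟩ := List.append_of_mem hx2
        have h1 := h.left
        have h2 : P G x b (x :: m2) := by
          have h' : P G a b ((l1 ++ x :: m1) ++ x :: m2) := by simpa using h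
          exact h'.right
        obtain ⟨m, hm1, hm2, hm3, hm4⟩ := ih _ (by simp at hn ⊢; omega) (h1.join h2) rfl
        refine ⟨m, hm1, hm2, ?_, ?_⟩
        · intro y hy
          have := hm3 hy
          simp at this ⊢
          tauto
        · simp at hm4 hn ⊢; omega

/-- `l` is a shortest-type link between `A` and `B`. -/
theorem P.polish {G : SimpleGraph V} {A B : Finset V} {a b : V} {l : List V} (h : P G a b l)
    (ha : a ∈ A) (hb : b ∈ B) : ∃ a' ∈ A, ∃ b' ∈ B, ∃ m, P G a' b' m ∧ m.Nodup ∧ m ⊆ l ∧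
      (∀ x ∈ m, x ∈ A → x = a') ∧ (∀ x ∈ m, x ∈ B → x = b') := by
  induction hn : l.length using Nat.strong_induction_on generalizing l a b with
  | _ n ih =>
    obtain ⟨m, hm1, hm2, hm3, hm4⟩ := h.extract
    by_cases hA : ∀ x ∈ m, x ∈ A → x = a
    · by_cases hB : ∀ x ∈ m, x ∈ B → x = b
      · exact ⟨a, ha, b, hb, m, hm1, hm2, hm3, hA, hB⟩
      · push Not at hB
        obtain ⟨x, hx, hxB, hxb⟩ := hB
        obtain ⟨l1, l2, rfl⟩ := List.append_of_mem hx
        have hne : l2 ≠ [] := by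
          rintro rfl
          exact hxb hm1.eq_of_concat
        have hpos := List.length_pos_iff.mpr hne
        obtain ⟨a', h1, b', h2, k, h3, h4, h5, h6, h7⟩ :=
          ih _ (by simp at hm4 ⊢; omega) hm1.left ha hxB rfl
        refine ⟨a', h1, b', h2, k, h3, h4, ?_, h6, h7⟩
        intro y hy
        apply hm3
        have := h5 hy
        simp at this ⊢
        tauto
    · push Not at hA
      obtain ⟨x, hx, hxB, hxb⟩ := hA
      obtain ⟨l1, l2, rfl⟩ := List.append_of_mem hx
      have hne : l1 ≠ [] := by
        rintro rfl
        exact hxb (P.eq_of_cons (by simpa using hm1))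
      have hpos := List.length_pos_iff.mpr hne
      obtain ⟨a', h1, b', h2, k, h3, h4, h5, h6, h7⟩ :=
        ih _ (by simp at hm4 ⊢; omega) hm1.right hxB hb rfl
      refine ⟨a', h1, b', h2, k, h3, h4, ?_, h6, h7⟩
      intro y hy
      apply hm3
      have := h5 hy
      simp at this ⊢
      tauto

/-- `S` separates `A` from `B`. -/
def Sep (G : SimpleGraph V) (A B S : Finset V) : Prop :=
  ∀ a ∈ A, ∀ b ∈ B, ∀ p, P G a b p → ∃ x ∈ p, x ∈ S

theorem Sep.symm {G : SimpleGraph V} {A B S : Finset V} (h : Sep G A B S) : Sep G B A S := by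
  intro b hb a ha p hp
  obtain ⟨x, hx, hxS⟩ := h a ha b hb _ hp.reverse
  exact ⟨x, by simpa using hx, hxS⟩

/-- a family of disjoint walks -/
def Fam (G : SimpleGraph V) (A B I : Finset V) (f : V → List V) : Prop :=
  (∀ i ∈ I, ∃ a ∈ A, ∃ b ∈ B, P G a b (f i)) ∧
    ∀ i ∈ I, ∀ j ∈ I, i ≠ j → ∀ x ∈ f i, x ∉ f j

theorem Fam.index_end {G : SimpleGraph V} {A B I : Finset V} {f : V → List V}
    (h : Fam G A B I f) : ∃ J ⊆ B, ∃ g : V → List V, J.card = I.card ∧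
      (∀ j ∈ J, ∃ a ∈ A, P G a j (g j) ∧ (g j).Nodup ∧ (∀ x ∈ g j, x ∈ A → x = a) ∧
        (∀ x ∈ g j, x ∈ B → x = j)) ∧
      ∀ i ∈ J, ∀ j ∈ J, i ≠ j → ∀ x ∈ g i, x ∉ g j := by
  have h1 : ∀ i, ∃ b m, i ∈ I → b ∈ B ∧ ∃ a ∈ A, P G a b m ∧ m.Nodup ∧ m ⊆ f i ∧
      (∀ x ∈ m, x ∈ A → x = a) ∧ (∀ x ∈ m, x ∈ B → x = b) := by
    intro i
    by_cases hi : i ∈ I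
    · obtain ⟨a, ha, b, hb, hp⟩ := h.1 i hi
      obtain ⟨a', h1, b', h2, k, h3, h4, h5, h6, h7⟩ := hp.polish ha hb
      exact ⟨b', k, fun _ => ⟨h2, a', h1, h3, h4, h5, h6, h7⟩⟩
    · exact ⟨i, [], fun h => absurd h hi⟩
  choose e m hem using h1
  have hinj : Set.InjOn e I := by
    intro i hi j hj hij
    by_contra hne
    obtain ⟨-, a, -, hp, -, hs, -⟩ := hem i hi
    obtain ⟨-, a', -, hp', -, hs', -⟩ := hem j hj
    refine h.2 i hi j hj hne (e i) (hs hp.last_mem) ?_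
    rw [hij]
    exact hs' hp'.last_mem
  have hJ : ∀ j ∈ I.image e, ∃ i, i ∈ I ∧ e i = j := by
    intro j hj
    simpa using hj
  choose! r hr1 hr2 using hJ
  refine ⟨I.image e, ?_, fun j => m (r j), Finset.card_image_of_injOn hinj, ?_, ?_⟩
  · intro j hj
    rw [← hr2 j hj]
    exact (hem _ (hr1 j hj)).1
  · intro j hj
    obtain ⟨hb, a, ha, hp, hd, -, h6, h7⟩ := hem _ (hr1 j hj)
    rw [hr2 j hj] at hp h7
    exact ⟨a, ha, hp, hd, h6, h7⟩
  · intro i hi j hj hij x hx hx'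
    have hne : r i ≠ r j := by
      intro heq
      apply hij
      rw [← hr2 i hi, ← hr2 j hj, heq]
    obtain ⟨-, a, -, hp, -, hs, -⟩ := hem _ (hr1 i hi)
    obtain ⟨-, a', -, hp', -, hs', -⟩ := hem _ (hr1 j hj)
    exact h.2 _ (hr1 i hi) _ (hr1 j hj) hne x (hs hx) (hs' hx')

theorem P.del {G : SimpleGraph V} {a b x y : V} {p : List V} (h : P G a b p)
    (hxy : ¬ (x ∈ p ∧ y ∈ p)) : P (G.deleteEdges {s(x, y)}) a b p := by
  apply h.mono_mem
  intro u hu v hv huv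
  rw [SimpleGraph.deleteEdges_adj]
  refine ⟨huv, ?_⟩
  simp only [Set.mem_singleton_iff, Sym2.eq_iff]
  rintro (⟨rfl, rfl⟩ | ⟨rfl, rfl⟩)
  · exact hxy ⟨hu, hv⟩
  · exact hxy ⟨hv, hu⟩

theorem P.undel {G : SimpleGraph V} {a b x y : V} {p : List V}
    (h : P (G.deleteEdges {s(x, y)}) a b p) : P G a b p := by
  apply h.mono_mem
  intro u _ v _ huv
  rw [SimpleGraph.deleteEdges_adj] at huv
  exact huv.1

theorem P.last_not_mem {G : SimpleGraph V} {a b x : V} {l m : List V}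
    (h : P G a b (l ++ x :: m)) (hd : (l ++ x :: m).Nodup) (hb : b ∈ l) : False := by
  have := h.right.last_mem
  rw [List.nodup_append] at hd
  exact hd.2.2 b hb b this rfl

theorem sepA {G : SimpleGraph V} {A B S T : Finset V} {x y : V}
    (hS : Sep (G.deleteEdges {s(x, y)}) A B S)
    (hyB : ∃ b ∈ B, ∃ p, P (G.deleteEdges {s(x, y)}) y b p ∧ ∀ z ∈ p, z ∉ S)
    (hxy : x ≠ y)
    (hT : Sep (G.deleteEdges {s(x, y)}) A (insert x S) T) : Sep G A B T := by
  intro a ha b hb p hp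
  have h1 : ∃ w ∈ p, w ∈ insert x S := by
    by_cases hx : x ∈ p
    · exact ⟨x, hx, by simp⟩
    · obtain ⟨w, hw, hwS⟩ := hS a ha b hb p (hp.del fun h => hx h.1)
      exact ⟨w, hw, by simp [hwS]⟩
  obtain ⟨w, hw, hwX⟩ := h1
  obtain ⟨l1, l2, rfl⟩ := List.append_of_mem hw
  obtain ⟨a', ha', b', hb', m, hm, hd, hsub, -, h7⟩ := hp.left.polish ha hwX
  have hm' : P (G.deleteEdges {s(x, y)}) a' b' m := by
    apply hm.del
    rintro ⟨hx, hy⟩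
    have hxb : x = b' := h7 x hx (by simp)
    obtain ⟨m1, m2, rfl⟩ := List.append_of_mem hy
    have hyS : ∀ z ∈ m1 ++ [y], z ∉ S := by
      intro z hz hzS
      have hzb : z = b' := h7 z (by simp at hz ⊢; tauto) (by simp [hzS])
      rw [hzb, ← hxb] at hz
      simp at hz
      rcases hz with hz | hz
      · rw [hxb] at hz
        exact hm.last_not_mem hd hz
      · exact hxy hz
    have h8 : P (G.deleteEdges {s(x, y)}) a' y (m1 ++ [y]) := by
      apply hm.left.del
      rintro ⟨h9, -⟩
      simp [hxy] at h9
      rw [hxb] at h9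
      exact hm.last_not_mem hd h9
    obtain ⟨b2, hb2, p2, hp2, hpS⟩ := hyB
    obtain ⟨k, hk, hk2⟩ := h8.trans hp2
    obtain ⟨z, hz, hzS⟩ := hS a' ha' b2 hb2 k hk
    rcases hk2 z hz with hz | hz
    · exact hyS z hz hzS
    · exact hpS z hz hzS
  obtain ⟨t, ht, htT⟩ := hT a' ha' b' hb' m hm'
  refine ⟨t, ?_, htT⟩
  have := hsub ht
  simp at this ⊢
  tauto

theorem Sep.comm_edge {G : SimpleGraph V} {x y : V} :
    G.deleteEdges {s(x, y)} = G.deleteEdges {s(y, x)} := by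
  rw [Sym2.eq_swap]

theorem menger_step {G : SimpleGraph V} {A B S : Finset V} {x y : V} {k : ℕ}
    (hS : Sep (G.deleteEdges {s(x, y)}) A B S) (hadj : G.Adj x y)
    (hAx : ∃ a ∈ A, ∃ p, P (G.deleteEdges {s(x, y)}) a x p ∧ ∀ z ∈ p, z ∉ S)
    (hyB : ∃ b ∈ B, ∃ p, P (G.deleteEdges {s(x, y)}) y b p ∧ ∀ z ∈ p, z ∉ S)
    (hSk : S.card < k)
    (hk : ∀ T, Sep G A B T → k ≤ T.card)
    (ih : ∀ A B : Finset V, (∀ T, Sep (G.deleteEdges {s(x, y)}) A B T → k ≤ T.card) →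
      ∃ I f, I.card = k ∧ Fam (G.deleteEdges {s(x, y)}) A B I f) :
    ∃ I f, I.card = k ∧ Fam G A B I f := by
  have hxy := hadj.ne
  have hxS : x ∉ S := by
    obtain ⟨a, -, p, hp, hpS⟩ := hAx
    exact hpS x hp.last_mem
  have hyS : y ∉ S := by
    obtain ⟨a, -, p, hp, hpS⟩ := hyB
    exact hpS y hp.head_mem
  obtain ⟨I1, f1, hI1, hf1⟩ := ih A (insert x S) (fun T hT => hk T (sepA hS hyB hxy hT))
  obtain ⟨I2, f2, hI2, hf2⟩ := ih B (insert y S) (fun T hT => by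
    refine hk T (Sep.symm ?_)
    rw [Sep.comm_edge] at hT
    refine sepA (x := y) (y := x) ?_ ?_ hxy.symm hT
    · rw [Sep.comm_edge]; exact hS.symm
    · rw [Sep.comm_edge]
      obtain ⟨a, ha, p, hp, hpS⟩ := hAx
      exact ⟨a, ha, p.reverse, hp.reverse, by simpa using hpS⟩)
  obtain ⟨J1, hJ1, g1, hc1, hg1, hd1⟩ := hf1.index_end
  obtain ⟨J2, hJ2, g2, hc2, hg2, hd2⟩ := hf2.index_end
  have e1 : J1 = insert x S := by
    apply Finset.eq_of_subset_of_card_le hJ1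
    rw [Finset.card_insert_of_notMem hxS]; omega
  have e2 : J2 = insert y S := by
    apply Finset.eq_of_subset_of_card_le hJ2
    rw [Finset.card_insert_of_notMem hyS]; omega
  subst e1 e2
  have hcard : (insert x S).card = k := by omega
  -- common vertices
  have key : ∀ i ∈ insert x S, ∀ j ∈ insert y S, ∀ v ∈ g1 i, v ∈ g2 j → v ∈ S ∧ v = i ∧ v = j := by
    intro i hi j hj v hv1 hv2
    obtain ⟨a, ha, hp, hdp, -, hpe⟩ := hg1 i hi
    obtain ⟨b, hb, hq, hdq, -, hqe⟩ := hg2 j hj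
    obtain ⟨l1, l2, hl⟩ := List.append_of_mem hv1
    obtain ⟨m1, m2, hm⟩ := List.append_of_mem hv2
    rw [hl] at hp hdp hpe
    rw [hm] at hq hdq hqe
    have hq' := hq.left.reverse
    obtain ⟨k', hk', hks⟩ := hp.left.trans hq'
    obtain ⟨z, hz, hzS⟩ := hS a ha b hb k' hk'
    have hzv : z = v := by
      rcases hks z hz with h | h
      · have h2 := hpe z (by simp at h ⊢; tauto) (by simp [hzS])
        simp at h
        rcases h with h | h
        · rw [h2] at h
          exact (hp.last_not_mem hdp h).elim
        · exact h
      · have h2 := hqe z (by simp at h ⊢; tauto) (by simp [hzS])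
        simp at h
        rcases h with h | h
        · exact h
        · rw [h2] at h
          exact (hq.last_not_mem hdq h).elim
    subst hzv
    exact ⟨hzS, hpe z (by simp) (by simp [hzS]), hqe z (by simp) (by simp [hzS])⟩
  have hjoin : ∀ i, ∃ m, i ∈ insert x S → (∃ a ∈ A, ∃ b ∈ B, P G a b m) ∧
      ∀ v ∈ m, v ∈ g1 i ∨ v ∈ g2 (if i = x then y else i) := by
    intro i
    by_cases hi : i ∈ insert x S
    · obtain ⟨a, ha, hp, -⟩ := hg1 i hi
      by_cases hix : i = x
      · subst hix
        obtain ⟨b, hb, hq, -⟩ := hg2 y (by simp)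
        refine ⟨g1 i ++ (g2 y).reverse, fun _ => ⟨⟨a, ha, b, hb, hp.undel.append hadj hq.undel.reverse⟩, ?_⟩⟩
        intro v hv
        simpa using hv
      · have hiS : i ∈ S := by simpa [hix] using hi
        obtain ⟨b, hb, hq, -⟩ := hg2 i (by simp [hiS])
        obtain ⟨m, hm, hms⟩ := hp.undel.trans hq.undel.reverse
        refine ⟨m, fun _ => ⟨⟨a, ha, b, hb, hm⟩, ?_⟩⟩
        intro v hv
        simpa [hix] using hms v hv
    · exact ⟨[], fun h => absurd h hi⟩
  choose f hf using hjoin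
  refine ⟨insert x S, f, hcard, fun i hi => (hf i hi).1, ?_⟩
  have hmem : ∀ i ∈ insert x S, (if i = x then y else i) ∈ insert y S := by
    intro i hi
    split_ifs with h
    · simp
    · simp [h] at hi
      simp [hi]
  intro i hi j hj hij v hvi hvj
  have hij' : (if i = x then y else i) ≠ (if j = x then y else j) := by
    split_ifs with h1 h2 h2
    · exact absurd (h1.trans h2.symm) hij
    · rintro rfl
      simp [h2] at hj
      exact hyS hj
    · rintro rfl
      simp [h1] at hi
      exact hyS hi
    · exact hij
  rcases (hf i hi).2 v hvi with h1 | h1 <;> rcases (hf j hj).2 v hvj with h2 | h2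
  · exact hd1 i hi j hj hij v h1 h2
  · obtain ⟨h3, h4, h5⟩ := key i hi _ (hmem j hj) v h1 h2
    split_ifs at h5 with h6
    · exact hyS (h5 ▸ h3)
    · exact hij (h4.symm.trans h5)
  · obtain ⟨h3, h4, h5⟩ := key j hj _ (hmem i hi) v h2 h1
    split_ifs at h5 with h6
    · exact hyS (h5 ▸ h3)
    · exact hij (h5.symm.trans h4)
  · exact hd2 _ (hmem i hi) _ (hmem j hj) hij' v h1 h2

theorem menger [Finite V] (G : SimpleGraph V) (A B : Finset V) (k : ℕ)
    (hk : ∀ T, Sep G A B T → k ≤ T.card) : ∃ I f, I.card = k ∧ Fam G A B I f := by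
  induction hn : G.edgeSet.ncard using Nat.strong_induction_on generalizing G A B with
  | _ n ih =>
    by_cases hE : ∃ x y, G.Adj x y
    · obtain ⟨x, y, hxy⟩ := hE
      have hlt : (G.deleteEdges {s(x, y)}).edgeSet.ncard < n := by
        rw [← hn]
        apply Set.ncard_lt_ncard _ (Set.toFinite _)
        rw [SimpleGraph.edgeSet_deleteEdges]
        refine ⟨Set.sdiff_subset, fun h => ?_⟩
        have := h (show s(x, y) ∈ G.edgeSet from hxy)
        simp at this
      have ih' := fun A B h => ih _ hlt (G.deleteEdges {s(x, y)}) A B h rfl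
      by_cases hS : ∀ T, Sep (G.deleteEdges {s(x, y)}) A B T → k ≤ T.card
      · obtain ⟨I, f, h1, h2⟩ := ih' A B hS
        refine ⟨I, f, h1, fun i hi => ?_, h2.2⟩
        obtain ⟨a, ha, b, hb, hp⟩ := h2.1 i hi
        exact ⟨a, ha, b, hb, hp.undel⟩
      · push Not at hS
        obtain ⟨S, hS, hSk⟩ := hS
        have hns : ¬ Sep G A B S := fun h => absurd (hk S h) (by omega)
        simp only [Sep] at hns
        push Not at hns
        obtain ⟨a, ha, b, hb, p, hp, hpS⟩ := hns
        have hnd : ∀ a ∈ A, ∀ b ∈ B, ∀ q, P (G.deleteEdges {s(x, y)}) a b q → (∀ z ∈ q, z ∉ S) → False := by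
          intro a ha b hb q hq hqS
          obtain ⟨z, hz, hzS⟩ := hS a ha b hb q hq
          exact hqS z hz hzS
        have hboth : x ∈ p ∧ y ∈ p := by
          by_contra hcon
          exact hnd a ha b hb p (hp.del hcon) hpS
        have hfirst : ∃ w ∈ ({x, y} : Finset V), ∃ a ∈ A, ∃ q,
            P (G.deleteEdges {s(x, y)}) a w q ∧ ∀ z ∈ q, z ∉ S := by
          obtain ⟨l1, l2, rfl⟩ := List.append_of_mem hboth.1
          obtain ⟨a', ha', b', hb', m, hm, -, hms, -, h7⟩ := hp.left.polish ha
            (show x ∈ ({x, y} : Finset V) by simp)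
          refine ⟨b', hb', a', ha', m, hm.del ?_, ?_⟩
          · rintro ⟨h1, h2⟩
            exact hxy.ne ((h7 x h1 (by simp)).trans (h7 y h2 (by simp)).symm)
          · intro z hz
            apply hpS
            have := hms hz
            simp at this ⊢
            tauto
        have hlast : ∃ w ∈ ({x, y} : Finset V), ∃ b ∈ B, ∃ q,
            P (G.deleteEdges {s(x, y)}) w b q ∧ ∀ z ∈ q, z ∉ S := by
          obtain ⟨l1, l2, rfl⟩ := List.append_of_mem hboth.1
          obtain ⟨a', ha', b', hb', m, hm, -, hms, h7, -⟩ := hp.right.polish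
            (show x ∈ ({x, y} : Finset V) by simp) hb
          refine ⟨a', ha', b', hb', m, hm.del ?_, ?_⟩
          · rintro ⟨h1, h2⟩
            exact hxy.ne ((h7 x h1 (by simp)).trans (h7 y h2 (by simp)).symm)
          · intro z hz
            apply hpS
            have := hms hz
            simp at this ⊢
            tauto
        obtain ⟨w, hw, a1, ha1, q1, hq1, hq1S⟩ := hfirst
        obtain ⟨w', hw', b1, hb1, q2, hq2, hq2S⟩ := hlast
        have hww : w ≠ w' := by
          rintro rfl
          obtain ⟨q, hq, hqs⟩ := hq1.trans hq2
          refine hnd a1 ha1 b1 hb1 q hq fun z hz => ?_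
          rcases hqs z hz with h | h
          · exact hq1S z h
          · exact hq2S z h
        simp at hw hw'
        rcases hw with rfl | rfl <;> rcases hw' with rfl | rfl
        · exact absurd rfl hww
        · exact menger_step hS hxy ⟨a1, ha1, q1, hq1, hq1S⟩ ⟨b1, hb1, q2, hq2, hq2S⟩ hSk hk ih'
        · rw [Sep.comm_edge] at hS hq1 hq2 ih'
          exact menger_step hS hxy.symm ⟨a1, ha1, q1, hq1, hq1S⟩ ⟨b1, hb1, q2, hq2, hq2S⟩ hSk hk ih'
        · exact absurd rfl hww
    · push Not at hE
      have hsep : Sep G A B (A ∩ B) := by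
        intro a ha b hb p hp
        obtain ⟨l, rfl⟩ := hp.exists_head
        rcases l with _ | ⟨c, l⟩
        · have := hp.2.2
          simp at this
          subst this
          exact ⟨a, by simp, by simp [ha, hb]⟩
        · have := hp.1
          rw [List.isChain_cons_cons] at this
          exact absurd this.1 (hE _ _)
      obtain ⟨I, hI, hIk⟩ := Finset.exists_subset_card_eq (hk _ hsep)
      refine ⟨I, fun i => [i], hIk, ?_, ?_⟩
      · intro i hi
        have := hI hi
        simp at this
        exact ⟨i, this.1, i, this.2, P.single G i⟩
      · intro i hi j hj hij x hx hx'
        simp at hx hx'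
        exact hij (hx.symm.trans hx')

end NK

namespace NK
open scoped Classical

/-- cyclic vertex lists -/
def IsCyc (G : SimpleGraph V) (l : List V) : Prop :=
  3 ≤ l.length ∧ l.Nodup ∧ ∃ a b, P G a b l ∧ G.Adj b a

/-- there is a path inside `Q` from `y` to `z` with at least `n` vertices -/
def Pn (G : SimpleGraph V) (Q : List V) (y z : V) (n : ℕ) : Prop :=
  ∃ l, P G y z l ∧ l.Nodup ∧ l ⊆ Q ∧ n ≤ l.length

/-- degree into a list -/
noncomputable def dg (G : SimpleGraph V) (Q : List V) (x : V) : ℕ :=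
  Q.countP (fun v => decide (G.Adj x v))

theorem dg_perm {G : SimpleGraph V} {Q Q' : List V} (h : Q.Perm Q') (x : V) :
    dg G Q x = dg G Q' x := h.countP_eq _

theorem Pn.symm {G : SimpleGraph V} {Q : List V} {y z : V} {n : ℕ} (h : Pn G Q y z n) :
    Pn G Q z y n := by
  obtain ⟨l, h1, h2, h3, h4⟩ := h
  exact ⟨l.reverse, h1.reverse, by simpa using h2, by simpa using h3, by simpa using h4⟩

theorem Pn.mono {G : SimpleGraph V} {Q Q' : List V} {y z : V} {n n' : ℕ} (h : Pn G Q y z n)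
    (hQ : Q ⊆ Q') (hn : n' ≤ n) : Pn G Q' y z n' := by
  obtain ⟨l, h1, h2, h3, h4⟩ := h
  exact ⟨l, h1, h2, fun x hx => hQ (h3 hx), by omega⟩

theorem Pn.of_perm {G : SimpleGraph V} {Q l rest : List V} {y z : V} (hP : P G y z l)
    (hQ : Q.Nodup) (hp : (l ++ rest).Perm Q) : Pn G Q y z (Q.length - rest.length) := by
  refine ⟨l, hP, ?_, ?_, ?_⟩
  · exact (hp.nodup_iff.mpr hQ).of_append_left
  · intro x hx
    exact hp.subset (by simp [hx])
  · have := hp.length_eq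
    simp at this
    omega

theorem IsCyc.swap {G : SimpleGraph V} {l m : List V} (h : IsCyc G (l ++ m)) :
    IsCyc G (m ++ l) := by
  obtain ⟨h1, h2, a, b, h3, h4⟩ := h
  refine ⟨by simp at h1 ⊢; omega, List.nodup_append_comm.mp h2, ?_⟩
  rcases eq_or_ne l [] with rfl | hl
  · exact ⟨a, b, by simpa using h3, h4⟩
  rcases eq_or_ne m [] with rfl | hm
  · exact ⟨a, b, by simpa using h3, h4⟩
  obtain ⟨c, d, h5, h6, h7⟩ := h3.of_append hl hm
  exact ⟨d, c, h7.append h4 h5, h6⟩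

theorem IsCyc.reverse {G : SimpleGraph V} {l : List V} (h : IsCyc G l) : IsCyc G l.reverse := by
  obtain ⟨h1, h2, a, b, h3, h4⟩ := h
  exact ⟨by simpa using h1, by simpa using h2, b, a, h3.reverse, h4.symm⟩

theorem IsCyc.form1 {G : SimpleGraph V} {Q : List V} (h : IsCyc G Q) {y : V} (hy : y ∈ Q) :
    ∃ A, IsCyc G (y :: A) ∧ (y :: A).Perm Q := by
  obtain ⟨l1, l2, rfl⟩ := List.append_of_mem hy
  refine ⟨l2 ++ l1, h.swap, ?_⟩
  exact List.perm_append_comm (l₁ := y :: l2) (l₂ := l1)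

theorem IsCyc.form2 {G : SimpleGraph V} {Q : List V} (h : IsCyc G Q) {y z : V} (hy : y ∈ Q)
    (hz : z ∈ Q) (hyz : y ≠ z) :
    ∃ A B, IsCyc G (y :: (A ++ z :: B)) ∧ (y :: (A ++ z :: B)).Perm Q := by
  obtain ⟨A, h1, h2⟩ := h.form1 hy
  have hz' : z ∈ A := by
    have := h2.symm.subset hz
    simp at this
    tauto
  obtain ⟨l1, l2, rfl⟩ := List.append_of_mem hz'
  exact ⟨l1, l2, h1, h2⟩

theorem IsCyc.swap2 {G : SimpleGraph V} {y z : V} {A B : List V}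
    (h : IsCyc G (y :: (A ++ z :: B))) : IsCyc G (z :: (B ++ y :: A)) :=
  IsCyc.swap (l := y :: A) (m := z :: B) h

theorem IsCyc.rev2 {G : SimpleGraph V} {y z : V} {A B : List V}
    (h : IsCyc G (y :: (A ++ z :: B))) : IsCyc G (y :: (B.reverse ++ z :: A.reverse)) := by
  have h2 := h.reverse
  have : (y :: (A ++ z :: B)).reverse = (B.reverse ++ z :: A.reverse) ++ [y] := by simp
  rw [this] at h2
  exact h2.swap

/-- last edge closes up -/
theorem IsCyc.path {G : SimpleGraph V} {y : V} {A : List V} (h : IsCyc G (y :: A)) :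
    P G y y (y :: (A ++ [y])) := by
  obtain ⟨h1, h2, a, b, h3, h4⟩ := h
  have := h3.eq_of_cons
  subst this
  exact h3.concat h4

theorem IsCyc.arc {G : SimpleGraph V} {y z : V} {A B : List V}
    (h : IsCyc G (y :: (A ++ z :: B))) : P G y z (y :: (A ++ [z])) := by
  have h2 := h.path
  have : P G y y ((y :: A) ++ z :: (B ++ [y])) := by simpa using h2
  exact this.left

theorem IsCyc.arc' {G : SimpleGraph V} {y z : V} {A B : List V}
    (h : IsCyc G (y :: (A ++ z :: B))) : P G y z (y :: (B.reverse ++ [z])) :=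
  h.rev2.arc

theorem IsCyc.of_path {G : SimpleGraph V} {a b : V} {l : List V} (h : P G a b l) (hd : l.Nodup)
    (hl : 3 ≤ l.length) (hab : G.Adj b a) : IsCyc G l := ⟨hl, hd, a, b, h, hab⟩

theorem IsCyc.pn_arc {G : SimpleGraph V} {y z : V} {A B : List V}
    (h : IsCyc G (y :: (A ++ z :: B))) : Pn G (y :: (A ++ z :: B)) y z (A.length + 2) := by
  have := Pn.of_perm (rest := B) h.arc h.2.1 (by simp)
  refine this.mono (by simp) (by simp; omega)

theorem IsCyc.pn_arc' {G : SimpleGraph V} {y z : V} {A B : List V}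
    (h : IsCyc G (y :: (A ++ z :: B))) : Pn G (y :: (A ++ z :: B)) y z (B.length + 2) := by
  have := h.rev2.pn_arc
  refine this.mono ?_ (by simp)
  intro x hx
  simp at hx ⊢
  tauto

theorem adjpair (R S : V → Prop) (t : List V) :
    (∃ X a b X', t = X ++ a :: b :: X' ∧ R a ∧ S b) ∨
      t.countP (fun v => decide (R v)) + t.tail.countP (fun v => decide (S v)) ≤ t.length := by
  induction t with
  | nil => right; simp
  | cons a t ih =>
    rcases ih with ⟨X, c, d, X', rfl, h1, h2⟩ | ih
    · exact Or.inl ⟨a :: X, c, d, X', rfl, h1, h2⟩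
    · rcases t with _ | ⟨b, t⟩
      · right
        by_cases h : R a <;> simp [h]
      · by_cases h : R a ∧ S b
        · exact Or.inl ⟨[], a, b, t, rfl, h.1, h.2⟩
        · right
          simp only [List.tail_cons, List.countP_cons, List.length_cons] at ih ⊢
          by_cases hR : R a <;> by_cases hS : S b <;> simp [hR, hS] at h ih ⊢ <;> omega

theorem adjpair' (R S : V → Prop) (t : List V) :
    (∃ X a b X', t = X ++ a :: b :: X' ∧ R a ∧ S b) ∨
      t.countP (fun v => decide (R v)) + t.countP (fun v => decide (S v)) ≤ t.length + 1 := by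
  rcases adjpair R S t with h | h
  · exact Or.inl h
  · right
    rcases t with _ | ⟨b, t⟩
    · simp
    · simp only [List.tail_cons, List.countP_cons, List.length_cons] at h ⊢
      by_cases hR : R b <;> by_cases hS : S b <;> simp [hR, hS] at h ⊢ <;> omega

/-- the easy case of the crossing lemma -/
theorem lemW0 {G : SimpleGraph V} {y z p r a : V} {A1 A2 B1 B2 : List V}
    (h : IsCyc G (y :: ((A1 ++ p :: A2) ++ z :: (B1 ++ r :: B2))))
    (ha : a ∈ A1 ++ [p]) (hra : G.Adj r a) :
    Pn G (y :: ((A1 ++ p :: A2) ++ z :: (B1 ++ r :: B2))) y z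
      ((A1 ++ p :: A2).length + (B1 ++ r :: B2).length + 2 - A1.length - B1.length) := by
  obtain ⟨X, X', hX⟩ := List.append_of_mem (show a ∈ A1 ++ p :: A2 by simp at ha ⊢; tauto)
  have hXl : X.length ≤ A1.length := by
    by_contra hcon
    push Not at hcon
    have hd := h.2.1
    rw [hX] at hd
    have : a ∈ X := by
      have h1 : A1 ++ [p] <+: X := by
        apply List.prefix_of_prefix_length_le (l₃ := A1 ++ p :: A2)
        · exact ⟨A2, by simp⟩
        · rw [hX]; exact ⟨a :: X', rfl⟩
        · simp; omega
      exact h1.subset ha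
    have hd2 := (List.nodup_cons.mp hd).2.of_append_left
    rw [List.nodup_append] at hd2
    exact hd2.2.2 a this a (by simp) rfl
  rw [hX] at h ⊢
  have h1 : P G y r (y :: (B2.reverse ++ [r])) := by
    have h0 : P G y z (y :: ((B1 ++ r :: B2).reverse ++ [z])) := h.arc'
    have : P G y z ((y :: B2.reverse) ++ r :: (B1.reverse ++ [z])) := by simpa using h0
    exact this.left
  have h2 : P G a z (a :: (X' ++ [z])) := by
    have h0 := h.arc
    have : P G y z ((y :: X) ++ a :: (X' ++ [z])) := by simpa using h0
    exact this.right
  have h3 := Pn.of_perm (rest := X ++ B1) (h1.append hra h2) h.2.1 (by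
    rw [List.perm_iff_count]
    intro v
    simp [List.count_cons]
    ring)
  refine h3.mono (by simp) ?_
  simp
  omega

theorem lemW {G : SimpleGraph V} {y z p r : V} {A1 A2 B1 B2 : List V}
    (h : IsCyc G (y :: ((A1 ++ p :: A2) ++ z :: (B1 ++ r :: B2))))
    (hdeg : (A1 ++ p :: A2).length + (B1 ++ r :: B2).length + 3 ≤
      dg G (y :: ((A1 ++ p :: A2) ++ z :: (B1 ++ r :: B2))) p +
      dg G (y :: ((A1 ++ p :: A2) ++ z :: (B1 ++ r :: B2))) r) :
    Pn G (y :: ((A1 ++ p :: A2) ++ z :: (B1 ++ r :: B2))) y z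
      ((A1 ++ p :: A2).length + (B1 ++ r :: B2).length + 2 - A1.length - B1.length) := by
  by_cases hr : ∃ a ∈ A1 ++ [p], G.Adj r a
  · obtain ⟨a, ha, hra⟩ := hr
    exact lemW0 h ha hra
  by_cases hp : ∃ b ∈ B1 ++ [r], G.Adj p b
  · obtain ⟨b, hb, hpb⟩ := hp
    have := (lemW0 h.swap2 hb hpb).symm
    refine this.mono ?_ (by omega)
    intro x hx
    simp at hx ⊢
    tauto
  push Not at hr hp
  have hrp : ¬ G.Adj r p := hr p (by simp)
  have hpr : ¬ G.Adj p r := fun hh => hrp hh.symm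
  -- degree count
  have hA1 : A1.countP (fun v => decide (G.Adj r v)) = 0 := by
    rw [List.countP_eq_zero]
    intro a ha
    simpa using hr a (by simp [ha])
  have hB1 : B1.countP (fun v => decide (G.Adj p v)) = 0 := by
    rw [List.countP_eq_zero]
    intro a ha
    simpa using hp a (by simp [ha])
  have hA1' : A1.countP (fun v => decide (G.Adj p v)) ≤ A1.length := List.countP_le_length
  have hB1' : B1.countP (fun v => decide (G.Adj r v)) ≤ B1.length := List.countP_le_length
  have h1 : P G y r (y :: (B2.reverse ++ [r])) := by
    have h0 : P G y z (y :: ((B1 ++ r :: B2).reverse ++ [z])) := h.arc'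
    have : P G y z ((y :: B2.reverse) ++ r :: (B1.reverse ++ [z])) := by simpa using h0
    exact this.left
  have h2 : P G p z (p :: (A2 ++ [z])) := by
    have h0 := h.arc
    have : P G y z ((y :: A1) ++ p :: (A2 ++ [z])) := by simpa using h0
    exact this.right
  rcases adjpair' (G.Adj r) (G.Adj p) (y :: B2.reverse) with ⟨X, a, b, X', hX, hra, hpb⟩ | hU
  · have e1 : y :: (B2.reverse ++ [r]) = X ++ a :: (b :: (X' ++ [r])) := by
      have : y :: (B2.reverse ++ [r]) = (y :: B2.reverse) ++ [r] := by simp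
      rw [this, hX]; simp
    rw [e1] at h1
    have h3 := h1.left
    have h4 : P G b r (b :: (X' ++ [r])) := by
      have : P G y r ((X ++ [a]) ++ b :: (X' ++ [r])) := by simpa using h1
      exact this.right
    have h5 := (h3.append hra.symm h4.reverse).append hpb.symm h2
    have hc : ∀ v, (y :: B2).count v = (X ++ a :: b :: X').count v := by
      intro v
      rw [← hX]
      simp [List.count_cons]
    have h6 := Pn.of_perm (rest := A1 ++ B1) h5 h.2.1 (by
      rw [List.perm_iff_count]
      intro v
      have := hc v
      simp [List.count_cons] at this ⊢
      linarith)
    refine h6.mono (by simp) ?_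
    simp
    omega
  rcases adjpair' (G.Adj r) (G.Adj p) (A2 ++ [z]) with ⟨X, a, b, X', hX, hra, hpb⟩ | hW
  · rw [hX] at h2
    have h3 : P G p a ((p :: X) ++ [a]) := by
      have : P G p z ((p :: X) ++ a :: (b :: X')) := by simpa using h2
      exact this.left
    have h4 : P G b z (b :: X') := by
      have : P G p z ((p :: (X ++ [a])) ++ b :: X') := by simpa using h2
      exact this.right
    have h5 := (h1.append hra h3.reverse).append hpb h4
    have hc : ∀ v, (A2 ++ [z]).count v = (X ++ a :: b :: X').count v := by
      intro v
      rw [← hX]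
    have h6 := Pn.of_perm (rest := A1 ++ B1) h5 h.2.1 (by
      rw [List.perm_iff_count]
      intro v
      have := hc v
      simp [List.count_cons] at this ⊢
      linarith)
    refine h6.mono (by simp) ?_
    simp
    omega
  exfalso
  simp only [dg, List.countP_cons, List.countP_append, List.countP_reverse, List.length_append,
    List.length_cons, List.countP_nil, List.length_reverse, List.length_nil] at hdeg hU hW
  simp only [hrp, hpr, G.irrefl] at hdeg
  simp at hdeg hU hW
  omega

end NK

namespace NK
open scoped Classical

theorem firstOcc (R : V → Prop) (A : List V) (h : ∃ x ∈ A, R x) :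
    ∃ A1 p A2, A = A1 ++ p :: A2 ∧ R p ∧ ∀ x ∈ A1, ¬ R x := by
  induction A with
  | nil => simp at h
  | cons a A ih =>
    by_cases ha : R a
    · exact ⟨[], a, A, rfl, ha, by simp⟩
    · obtain ⟨A1, p, A2, rfl, h1, h2⟩ := ih (by
        obtain ⟨x, hx, hR⟩ := h
        simp at hx
        rcases hx with rfl | hx
        · exact absurd hR ha
        · exact ⟨x, hx, hR⟩)
      refine ⟨a :: A1, p, A2, rfl, h1, ?_⟩
      intro x hx
      simp at hx
      rcases hx with rfl | hx
      · exact ha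
      · exact h2 x hx

theorem lastOcc (R : V → Prop) (A : List V) (h : ∃ x ∈ A, R x) :
    ∃ A1 p A2, A = A1 ++ p :: A2 ∧ R p ∧ ∀ x ∈ A2, ¬ R x := by
  obtain ⟨A1, p, A2, h1, h2, h3⟩ := firstOcc R A.reverse (by simpa using h)
  refine ⟨A2.reverse, p, A1.reverse, ?_, h2, by simpa using h3⟩
  have := congrArg List.reverse h1
  simpa using this

theorem firstLast (R : V → Prop) (A : List V) (h : ∃ x ∈ A, R x) :
    ∃ A1 p A2 A3 q A4, A = A1 ++ p :: A2 ∧ A = A3 ++ q :: A4 ∧ R p ∧ R q ∧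
      A1.length + A4.length + A.countP (fun v => decide (R v)) ≤ A.length := by
  obtain ⟨A1, p, A2, rfl, h1, h2⟩ := firstOcc R A h
  have hA1 : A1.countP (fun v => decide (R v)) = 0 := by
    rw [List.countP_eq_zero]
    intro a ha
    simpa using h2 a ha
  by_cases h3 : ∃ x ∈ A2, R x
  · obtain ⟨X, q, A4, rfl, h4, h5⟩ := lastOcc R A2 h3
    have hA4 : A4.countP (fun v => decide (R v)) = 0 := by
      rw [List.countP_eq_zero]
      intro a ha
      simpa using h5 a ha
    have hX : X.countP (fun v => decide (R v)) ≤ X.length := List.countP_le_length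
    refine ⟨A1, p, _, A1 ++ p :: X, q, A4, rfl, by simp, h1, h4, ?_⟩
    simp [hA1, hA4, h1, h4]
    omega
  · push Not at h3
    have hA4 : A2.countP (fun v => decide (R v)) = 0 := by
      rw [List.countP_eq_zero]
      intro a ha
      simpa using h3 a ha
    refine ⟨A1, p, _, A1, p, A2, rfl, rfl, h1, h1, ?_⟩
    simp [hA1, hA4, h1]

theorem dg_lt {G : SimpleGraph V} {Q : List V} {x : V} (hx : x ∈ Q) : dg G Q x < Q.length := by
  obtain ⟨l1, l2, rfl⟩ := List.append_of_mem hx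
  have h1 : l1.countP (fun v => decide (G.Adj x v)) ≤ l1.length := List.countP_le_length
  have h2 : l2.countP (fun v => decide (G.Adj x v)) ≤ l2.length := List.countP_le_length
  simp [dg]
  omega

theorem lemH_A {G : SimpleGraph V} {t : ℕ} {y z : V} {A B : List V} (ht : 2 ≤ t) (R : V → Prop)
    (h : IsCyc G (y :: (A ++ z :: B)))
    (hR : ∀ v, R v → t ≤ dg G (y :: (A ++ z :: B)) v)
    (hc : t ≤ (y :: (A ++ z :: B)).countP (fun v => decide (R v)))
    (hA : ∀ x ∈ A, ¬ R x) : Pn G (y :: (A ++ z :: B)) y z (t + 1) := by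
  have hA0 : A.countP (fun v => decide (R v)) = 0 := by
    rw [List.countP_eq_zero]
    intro a ha
    simpa using hA a ha
  have hlen := h.1
  rcases B with _ | ⟨r, B⟩
  · refine h.pn_arc.mono (by simp) ?_
    simp only [List.countP_cons, List.countP_append, hA0, List.countP_nil] at hc
    simp at hlen
    split_ifs at hc <;> omega
  · by_cases hB : t ≤ (r :: B).length + 1
    · exact h.pn_arc'.mono (by simp) (by omega)
    push Not at hB
    have hBl : B.countP (fun v => decide (R v)) ≤ B.length := List.countP_le_length
    have hrR : R r := by
      by_contra hr
      simp [List.countP_cons, hA0, hr] at hc hB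
      split_ifs at hc <;> omega
    have hdr := hR r hrR
    by_cases ha : ∃ a ∈ A, G.Adj r a
    · obtain ⟨a, ha, hra⟩ := ha
      obtain ⟨X, X', rfl⟩ := List.append_of_mem ha
      have := lemW0 (B1 := []) h (a := a) (by simp) hra
      refine this.mono (by simp) ?_
      have hna := hA a (by simp)
      simp [List.countP_cons, hna] at hc hB ⊢
      simp at hA0
      have h1 : X.countP (fun v => decide (R v)) = 0 := by
        rw [List.countP_eq_zero]
        intro a ha
        simpa using hA0.1 a ha
      have h2 : X'.countP (fun v => decide (R v)) = 0 := by
        rw [List.countP_eq_zero]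
        intro a ha
        simpa using hA0.2.2 a ha
      rw [h1, h2] at hc
      split_ifs at hc <;> omega
    · push Not at ha
      exfalso
      have hA1 : A.countP (fun v => decide (G.Adj r v)) = 0 := by
        rw [List.countP_eq_zero]
        intro a h
        simpa using ha a h
      have hB1 : B.countP (fun v => decide (G.Adj r v)) ≤ B.length := List.countP_le_length
      simp [dg, List.countP_cons, hA1] at hdr hB
      split_ifs at hdr <;> omega

theorem lemH {G : SimpleGraph V} {Q : List V} {t : ℕ} (ht : 2 ≤ t) (h : IsCyc G Q)
    (R : V → Prop) (hR : ∀ v, R v → t ≤ dg G Q v)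
    (hc : t ≤ Q.countP (fun v => decide (R v))) {y z : V} (hy : y ∈ Q) (hz : z ∈ Q)
    (hyz : y ≠ z) : Pn G Q y z (t + 1) := by
  obtain ⟨A, B, h1, h2⟩ := h.form2 hy hz hyz
  suffices hs : Pn G (y :: (A ++ z :: B)) y z (t + 1) from hs.mono h2.subset le_rfl
  have hdg : ∀ v, dg G Q v = dg G (y :: (A ++ z :: B)) v := fun v => (dg_perm h2 v).symm
  have hc' : t ≤ (y :: (A ++ z :: B)).countP (fun v => decide (R v)) := by
    rw [h2.countP_eq]; exact hc
  have hR' : ∀ v, R v → t ≤ dg G (y :: (A ++ z :: B)) v := by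
    intro v hv
    rw [← hdg]; exact hR v hv
  clear hc hR
  by_cases hA : ∃ x ∈ A, R x
  swap
  · push Not at hA
    exact lemH_A ht R h1 hR' hc' hA
  by_cases hB : ∃ x ∈ B, R x
  swap
  · push Not at hB
    have hp : (y :: (A ++ z :: B)).Perm (z :: (B ++ y :: A)) :=
      List.perm_append_comm (l₁ := y :: A) (l₂ := z :: B)
    have := lemH_A ht R h1.swap2 (fun v hv => by rw [← dg_perm hp]; exact hR' v hv)
      (by rw [← hp.countP_eq]; exact hc') hB
    exact this.symm.mono hp.symm.subset le_rfl
  by_cases hn : 2 * t ≤ (y :: (A ++ z :: B)).length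
  · simp at hn
    by_cases hAB : B.length ≤ A.length
    · exact h1.pn_arc.mono (by simp) (by omega)
    · exact h1.pn_arc'.mono (by simp) (by omega)
  push Not at hn
  have hnt : t + 1 ≤ (y :: (A ++ z :: B)).length := by
    obtain ⟨x, hx, hxR⟩ := hA
    have := dg_lt (G := G) (Q := y :: (A ++ z :: B)) (x := x) (by simp [hx])
    have := hR' x hxR
    omega
  obtain ⟨A1, p, A2, A3, p', A4, eA, eA', hp, hp', hAl⟩ := firstLast R A hA
  obtain ⟨B1, r, B2, B3, r', B4, eB, eB', hr, hr', hBl⟩ := firstLast R B hB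
  have W1 : Pn G (y :: (A ++ z :: B)) y z (A.length + B.length + 2 - A1.length - B1.length) := by
    have hd1 := hR' p hp
    have hd2 := hR' r hr
    rw [eA, eB] at h1 hd1 hd2 hn ⊢
    apply lemW h1
    simp only [List.length_cons, List.length_append] at hn ⊢
    omega
  have W2 : Pn G (y :: (A ++ z :: B)) y z (A.length + B.length + 2 - A4.length - B4.length) := by
    have hd1 := hR' p' hp'
    have hd2 := hR' r' hr'
    have hpm : (y :: (A ++ z :: B)).Perm (y :: (B.reverse ++ z :: A.reverse)) := by
      rw [List.perm_iff_count]
      intro v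
      simp [List.count_cons]
      ring
    have hA4 : A.reverse = A4.reverse ++ p' :: A3.reverse := by rw [eA']; simp
    have hB4 : B.reverse = B4.reverse ++ r' :: B3.reverse := by rw [eB']; simp
    have h3 := h1.rev2
    rw [dg_perm hpm] at hd1 hd2
    have hAl : A.length = A.reverse.length := by simp
    have hBl : B.length = B.reverse.length := by simp
    have hAl4 : A4.length = A4.reverse.length := by simp
    have hBl4 : B4.length = B4.reverse.length := by simp
    have hn' : A.reverse.length + B.reverse.length + 2 < 2 * t := by
      simp at hn ⊢; omega
    have : Pn G (y :: (B.reverse ++ z :: A.reverse)) y z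
        (B.reverse.length + A.reverse.length + 2 - B4.reverse.length - A4.reverse.length) := by
      rw [hA4, hB4] at h3 hd1 hd2 hn' ⊢
      apply lemW h3
      omega
    exact this.mono hpm.symm.subset (by omega)
  simp only [List.countP_cons, List.countP_append] at hc'
  simp at hn hnt
  have : t ≤ A.length + B.length + 2 - A1.length - B1.length - 1 ∨
      t ≤ A.length + B.length + 2 - A4.length - B4.length - 1 := by
    split_ifs at hc' <;> omega
  rcases this with h5 | h5
  · exact W1.mono (by simp) (by omega)
  · exact W2.mono (by simp) (by omega)

end NK

namespace NK
open scoped Classical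

theorem cs_aux (n c : ℕ) (e : Fin (n + 2) → ℕ) (g : Fin (n + 2) → ℕ)
    (h1 : ∀ k : Fin (n + 1), g k.castSucc + e k.castSucc ≤ e k.succ)
    (h2 : g (Fin.last (n + 1)) + e (Fin.last (n + 1)) ≤ c + e 0) : ∑ k, g k ≤ c := by
  have key : ∀ m (e : Fin (m + 1) → ℕ) (g : Fin m → ℕ),
      (∀ k : Fin m, g k + e k.castSucc ≤ e k.succ) → ∑ k, g k + e 0 ≤ e (Fin.last m) := by
    intro m
    induction m with
    | zero => intro e g _; simp
    | succ m ih =>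
      intro e g h
      rw [Fin.sum_univ_castSucc]
      have := ih (fun k => e k.castSucc) (fun k => g k.castSucc) (fun k => by
        have := h k.castSucc
        simpa using this)
      have h' := h (Fin.last m)
      simp at this h'
      omega
  rw [Fin.sum_univ_castSucc]
  have := key (n + 1) e (fun k => g k.castSucc) h1
  omega

theorem cs {α : Type*} (Y : Finset α) (n c : ℕ) (hn : Y.card = n + 2) (pos : α → ℕ)
    (hinj : Set.InjOn pos Y) (gap : α → α → ℕ)
    (h : ∀ y ∈ Y, ∀ y' ∈ Y, pos y < pos y' → gap y y' + pos y ≤ pos y' ∧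
      gap y' y + pos y' ≤ c + pos y) :
    ∃ e : Fin (n + 2) → α, Function.Injective e ∧ (∀ k, e k ∈ Y) ∧ (∀ y ∈ Y, ∃ k, e k = y) ∧
      ∑ k, gap (e k) (e (k + 1)) ≤ c := by
  have hcard : (Y.image pos).card = n + 2 := by rw [Finset.card_image_of_injOn hinj, hn]
  let o := (Y.image pos).orderEmbOfFin hcard
  have ho : ∀ k, ∃ y ∈ Y, pos y = o k := by
    intro k
    have := (Y.image pos).orderEmbOfFin_mem hcard k
    exact Finset.mem_image.mp this
  choose e he1 he2 using ho
  refine ⟨e, ?_, he1, ?_, ?_⟩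
  · intro i j hij
    have : o i = o j := by rw [← he2, ← he2, hij]
    exact o.injective this
  · intro y hy
    have : pos y ∈ Set.range o := by
      rw [Finset.range_orderEmbOfFin]
      simp
      exact ⟨y, hy, rfl⟩
    obtain ⟨k, hk⟩ := this
    refine ⟨k, hinj (he1 k) hy ?_⟩
    rw [he2, hk]
  · apply cs_aux n c (fun k => pos (e k))
    · intro k
      have hlt : pos (e k.castSucc) < pos (e k.succ) := by
        rw [he2, he2]
        exact o.strictMono Fin.castSucc_lt_succ
      have h3 := (h _ (he1 _) _ (he1 _) hlt).1
      have : k.castSucc + 1 = k.succ := Fin.coeSucc_eq_succ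
      simp only [this]
      exact h3
    · have hlt : pos (e 0) < pos (e (Fin.last (n + 1))) := by
        rw [he2, he2]
        exact o.strictMono (Fin.last_pos)
      have h3 := (h _ (he1 _) _ (he1 _) hlt).2
      have : Fin.last (n + 1) + 1 = 0 := Fin.last_add_one _
      simp only [this]
      exact h3

theorem cs_weights {α : Type*} (Y : Finset α) (c : ℕ) (hn : 2 ≤ Y.card) (pos : α → ℕ)
    (hinj : Set.InjOn pos Y) (w : α → ℕ)
    (h : ∀ y ∈ Y, ∀ y' ∈ Y, pos y < pos y' → w y + w y' + 2 * pos y ≤ 2 * pos y' ∧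
      w y + w y' + 2 * pos y' ≤ 2 * c + 2 * pos y) : ∑ y ∈ Y, w y ≤ c := by
  obtain ⟨n, hn⟩ : ∃ n, Y.card = n + 2 := ⟨Y.card - 2, by omega⟩
  obtain ⟨e, he1, he2, he3, he4⟩ := cs Y n (2 * c) hn (fun y => 2 * pos y)
    (fun a ha b hb hab => hinj ha hb (by dsimp only at hab; omega)) (fun y y' => w y + w y') (by
      intro y hy y' hy' hlt
      have := h y hy y' hy' (by omega)
      constructor
      · exact this.1
      · have := this.2
        omega)
  have hY : Y = Finset.univ.image e := by
    ext y
    simp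
    constructor
    · exact he3 y
    · rintro ⟨k, rfl⟩
      exact he2 k
  have hs : ∑ y ∈ Y, w y = ∑ k, w (e k) := by
    rw [hY, Finset.sum_image]
    intro a _ b _ hab
    exact he1 hab
  have hs2 : ∑ k : Fin (n + 2), w (e (k + 1)) = ∑ k, w (e k) :=
    Equiv.sum_comp (Equiv.addRight (1 : Fin (n + 2))) (fun k => w (e k))
  rw [Finset.sum_add_distrib, hs2] at he4
  omega

theorem cs_classes {α β : Type*} (Y : Finset α) (c d : ℕ) (pos : α → ℕ)
    (hinj : Set.InjOn pos Y) (cls : α → β) (hK : 2 ≤ (Y.image cls).card)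
    (h : ∀ y ∈ Y, ∀ y' ∈ Y, pos y < pos y' → 2 + pos y ≤ pos y' ∧ 2 + pos y' ≤ c + pos y)
    (h' : ∀ y ∈ Y, ∀ y' ∈ Y, pos y < pos y' → cls y ≠ cls y' →
      d + 2 + pos y ≤ pos y' ∧ d + 2 + pos y' ≤ c + pos y) :
    2 * Y.card + d * (Y.image cls).card ≤ c := by
  have hcl : (Y.image cls).card ≤ Y.card := Finset.card_image_le
  obtain ⟨n, hn⟩ : ∃ n, Y.card = n + 2 := ⟨Y.card - 2, by omega⟩
  obtain ⟨e, he1, he2, he3, he4⟩ := cs Y n c hn pos hinj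
    (fun y y' => if cls y = cls y' then 2 else 2 + d) (by
      intro y hy y' hy' hlt
      have h1 := h y hy y' hy' hlt
      have h2 := h' y hy y' hy' hlt
      by_cases hc : cls y = cls y'
      · simp [hc]; exact h1
      · have hc' : ¬ cls y' = cls y := fun h => hc h.symm
        have := h2 hc
        simp only [hc, hc', if_false]
        omega)
  have hsum : ∑ k, (if cls (e k) = cls (e (k + 1)) then 2 else 2 + d) =
      2 * (n + 2) + d * (Finset.univ.filter (fun k => cls (e k) ≠ cls (e (k + 1)))).card := by
    have : ∀ k, (if cls (e k) = cls (e (k + 1)) then 2 else 2 + d) =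
        2 + (if cls (e k) ≠ cls (e (k + 1)) then d else 0) := by
      intro k
      by_cases hc : cls (e k) = cls (e (k + 1)) <;> simp [hc]
    simp only [this]
    rw [Finset.sum_add_distrib, ← Finset.sum_filter]
    simp
    ring
  have hle : (Y.image cls).card ≤
      (Finset.univ.filter (fun k => cls (e k) ≠ cls (e (k + 1)))).card := by
    have hsub : Y.image cls ⊆
        (Finset.univ.filter (fun k => cls (e k) ≠ cls (e (k + 1)))).image (fun k => cls (e k)) := by
      intro b hb
      by_contra hcon
      simp at hcon
      simp at hb
      obtain ⟨y, hy, rfl⟩ := hb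
      obtain ⟨k0, rfl⟩ := he3 y hy
      have hstep : ∀ j : ℕ, cls (e (k0 + Fin.ofNat (n + 2) j)) = cls (e k0) := by
        intro j
        induction j with
        | zero => simp
        | succ j ih =>
          by_contra hne
          apply hcon (k0 + Fin.ofNat (n + 2) j) _ ih
          rw [ih]
          intro h
          apply hne
          rw [h]
          congr 2
          rw [add_assoc]
          congr 1
          ext
          simp [Fin.val_add]
      have hall : ∀ k, cls (e k) = cls (e k0) := by
        intro k
        have := hstep ((k - k0 : Fin (n + 2)) : ℕ)
        rw [Fin.ofNat_val_eq_self] at this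
        rw [← this]
        congr 2
        abel
      have : (Y.image cls).card ≤ 1 := by
        rw [Finset.card_le_one]
        intro a ha b hb
        simp at ha hb
        obtain ⟨x, hx, rfl⟩ := ha
        obtain ⟨x', hx', rfl⟩ := hb
        obtain ⟨k, rfl⟩ := he3 x hx
        obtain ⟨k', rfl⟩ := he3 x' hx'
        rw [hall k, hall k']
      omega
    exact (Finset.card_le_card hsub).trans Finset.card_image_le
  rw [hsum] at he4
  rw [hn]
  have := Nat.mul_le_mul_left d hle
  omega

/-- a path from `f` to `f'` with interior outside `Q`, inside `Reg`, at least `L` edges -/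
def Ear (G : SimpleGraph V) (Reg : V → Prop) (Q : List V) (f f' : V) (L : ℕ) : Prop :=
  ∃ I : List V, P G f f' (f :: (I ++ [f'])) ∧ I.Nodup ∧ (∀ x ∈ I, x ∉ Q ∧ Reg x) ∧ L ≤ I.length + 1

theorem Ear.symm {G : SimpleGraph V} {Reg : V → Prop} {Q : List V} {f f' : V} {L : ℕ}
    (h : Ear G Reg Q f f' L) : Ear G Reg Q f' f L := by
  obtain ⟨I, h1, h2, h3, h4⟩ := h
  refine ⟨I.reverse, ?_, by simpa using h2, by simpa using h3, by simpa using h4⟩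
  have := h1.reverse
  simpa using this

theorem Ear.mono {G : SimpleGraph V} {Reg : V → Prop} {Q : List V} {f f' : V} {L L' : ℕ}
    (h : Ear G Reg Q f f' L) (hL : L' ≤ L) : Ear G Reg Q f f' L' := by
  obtain ⟨I, h1, h2, h3, h4⟩ := h
  exact ⟨I, h1, h2, h3, by omega⟩

/-- `Q` is a longest cycle inside `Reg` -/
def MaxCyc (G : SimpleGraph V) (Reg : V → Prop) (Q : List V) : Prop :=
  IsCyc G Q ∧ (∀ x ∈ Q, Reg x) ∧ ∀ Q', IsCyc G Q' → (∀ x ∈ Q', Reg x) → Q'.length ≤ Q.length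

theorem ear_arc {G : SimpleGraph V} {Reg : V → Prop} {Q : List V} {f f' : V} {L : ℕ} {A B : List V}
    (hQ : MaxCyc G Reg Q) (h : IsCyc G (f :: (A ++ f' :: B))) (hp : (f :: (A ++ f' :: B)).Perm Q)
    (he : Ear G Reg Q f f' L) : L ≤ A.length + 1 := by
  obtain ⟨I, h1, h2, h3, h4⟩ := he
  by_contra hcon
  push Not at hcon
  have hl := hp.length_eq
  have h5 := h.swap2.arc
  have h6 : P G f f ((f :: I) ++ f' :: (B ++ [f])) := by
    apply P.join
    · simpa using h1
    · exact h5
  have h7 : P G f f (((f :: I) ++ f' :: B) ++ [f]) := by simpa using h6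
  obtain ⟨b, c, h8, h9, h10⟩ := h7.of_append (by simp) (by simp)
  have hc : f = c := h10.eq_of_cons
  subst hc
  have hd := h.2.1
  have hnd : ((f :: I) ++ f' :: B).Nodup := by
    have hI : ∀ x ∈ I, x ∉ f :: (A ++ f' :: B) := fun x hx hx' => (h3 x hx).1 (hp.subset hx')
    have hsub : (f :: f' :: B).Nodup := by
      refine List.Nodup.sublist ?_ hd
      simp
    have : (I ++ f :: f' :: B).Nodup := by
      rw [List.nodup_append]
      refine ⟨h2, hsub, ?_⟩
      rintro x hx y hy rfl
      apply hI x hx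
      simp at hy ⊢
      tauto
    refine (List.Perm.nodup_iff ?_).mpr this
    rw [List.perm_iff_count]
    intro v
    simp [List.count_cons]
    ring
  have h3l := hQ.1.1
  have hlen : Q.length < ((f :: I) ++ f' :: B).length := by
    simp at hl ⊢
    omega
  have := hQ.2.2 _ (IsCyc.of_path h8 hnd (by omega) h9) (by
    intro x hx
    simp at hx
    rcases hx with hx | hx | hx | hx
    · exact hQ.2.1 x (hp.subset (by simp [hx]))
    · exact (h3 x hx).2
    · exact hQ.2.1 x (hp.subset (by simp [hx]))
    · exact hQ.2.1 x (hp.subset (by simp [hx])))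
  omega

theorem ear_pos {G : SimpleGraph V} {Reg : V → Prop} {Q : List V} {f f' : V} {L : ℕ}
    (hQ : MaxCyc G Reg Q) (hf' : f' ∈ Q) (hlt : Q.idxOf f < Q.idxOf f')
    (he : Ear G Reg Q f f' L) :
    L + Q.idxOf f ≤ Q.idxOf f' ∧ L + Q.idxOf f' ≤ Q.length + Q.idxOf f := by
  have hj : Q.idxOf f' < Q.length := List.idxOf_lt_length_iff.mpr hf'
  have hf : f ∈ Q := List.idxOf_lt_length_iff.mp (by omega)
  obtain ⟨X, Y, rfl⟩ := List.append_of_mem hf'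
  have hd := hQ.1.2.1
  have hX' : f' ∉ X := by
    rw [List.nodup_append] at hd
    intro h
    exact hd.2.2 f' h f' (by simp) rfl
  have hjX : (X ++ f' :: Y).idxOf f' = X.length := by
    rw [List.idxOf_append_of_notMem hX']; simp
  have hfX : f ∈ X := by
    by_contra h
    rw [List.idxOf_append_of_notMem h] at hlt
    omega
  obtain ⟨X1, A, rfl⟩ := List.append_of_mem hfX
  have hX1 : f ∉ X1 := by
    have := hd.of_append_left
    rw [List.nodup_append] at this
    intro h
    exact this.2.2 f h f (by simp) rfl
  have hiX : ((X1 ++ f :: A) ++ f' :: Y).idxOf f = X1.length := by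
    rw [List.append_assoc, List.idxOf_append_of_notMem hX1]; simp
  have hc : IsCyc G (f :: (A ++ f' :: (Y ++ X1))) := by
    have h1 : IsCyc G (X1 ++ (f :: (A ++ f' :: Y))) := by simpa using hQ.1
    simpa using h1.swap
  have hp : (f :: (A ++ f' :: (Y ++ X1))).Perm ((X1 ++ f :: A) ++ f' :: Y) := by
    rw [List.perm_iff_count]
    intro v
    simp [List.count_cons]
    ring
  have h1 := ear_arc hQ hc hp he
  have h2 := ear_arc hQ hc.swap2 (hp := by
    refine List.Perm.trans ?_ hp
    exact List.perm_append_comm (l₁ := f' :: (Y ++ X1)) (l₂ := f :: A)) he.symm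
  rw [hjX, hiX]
  simp at h1 h2 ⊢
  omega

theorem ear_weights {α : Type*} {G : SimpleGraph V} {Reg : V → Prop} {Q : List V}
    (hQ : MaxCyc G Reg Q) (Y : Finset α) (φ : α → V) (hinj : Set.InjOn φ Y)
    (hmem : ∀ y ∈ Y, φ y ∈ Q) (w : α → ℕ) (hn : 2 ≤ Y.card)
    (h : ∀ y ∈ Y, ∀ y' ∈ Y, y ≠ y' → ∃ L, Ear G Reg Q (φ y) (φ y') L ∧ w y + w y' ≤ 2 * L) :
    ∑ y ∈ Y, w y ≤ Q.length := by
  apply cs_weights Y _ hn (fun y => Q.idxOf (φ y))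
  · intro a ha b hb hab
    exact hinj ha hb (List.idxOf_inj (hmem a ha) |>.mp hab)
  · intro y hy y' hy' hlt
    have hne : y ≠ y' := by rintro rfl; simp at hlt
    obtain ⟨L, h1, h2⟩ := h y hy y' hy' hne
    have := ear_pos hQ (hmem y' hy') hlt h1
    omega

theorem ear_classes {α β : Type*} {G : SimpleGraph V} {Reg : V → Prop} {Q : List V}
    (hQ : MaxCyc G Reg Q) (Y : Finset α) (φ : α → V) (hinj : Set.InjOn φ Y)
    (hmem : ∀ y ∈ Y, φ y ∈ Q) (cls : α → β) (d : ℕ) (hK : 2 ≤ (Y.image cls).card)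
    (h : ∀ y ∈ Y, ∀ y' ∈ Y, y ≠ y' → Ear G Reg Q (φ y) (φ y') 2)
    (h' : ∀ y ∈ Y, ∀ y' ∈ Y, y ≠ y' → cls y ≠ cls y' → Ear G Reg Q (φ y) (φ y') (d + 2)) :
    2 * Y.card + d * (Y.image cls).card ≤ Q.length := by
  apply cs_classes Y _ d (fun y => Q.idxOf (φ y)) _ cls hK
  · intro y hy y' hy' hlt
    have hne : y ≠ y' := by rintro rfl; simp at hlt
    exact ear_pos hQ (hmem y' hy') hlt (h y hy y' hy' hne)
  · intro y hy y' hy' hlt hc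
    have hne : y ≠ y' := by rintro rfl; simp at hlt
    exact ear_pos hQ (hmem y' hy') hlt (h' y hy y' hy' hne hc)
  · intro a ha b hb hab
    exact hinj ha hb (List.idxOf_inj (hmem a ha) |>.mp hab)

end NK

namespace NK
open scoped Classical

/-- degree into a finset -/
noncomputable def dO (G : SimpleGraph V) (Ω : Finset V) (x : V) : ℕ :=
  (Ω.filter (fun v => G.Adj x v)).card

def Good (G : SimpleGraph V) (Hs : Finset V) (k : ℕ) : Prop :=
  ∃ Z ⊆ Hs, k + 1 ≤ Z.card ∧ ∀ a ∈ Z, ∀ b ∈ Z, a ≠ b →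
    ∃ l, P G a b l ∧ l.Nodup ∧ (∀ x ∈ l, x ∈ Z) ∧ k + 1 ≤ l.length

theorem Good.mono {G : SimpleGraph V} {Hs Hs' : Finset V} {k : ℕ} (h : Good G Hs k)
    (hs : Hs ⊆ Hs') : Good G Hs' k := by
  obtain ⟨Z, h1, h2⟩ := h
  exact ⟨Z, h1.trans hs, h2⟩

theorem Good.le {G : SimpleGraph V} {Hs : Finset V} {k k' : ℕ} (h : Good G Hs k)
    (hs : k' ≤ k) : Good G Hs k' := by
  obtain ⟨Z, h1, h2, h3⟩ := h
  refine ⟨Z, h1, by omega, fun a ha b hb hab => ?_⟩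
  obtain ⟨l, h4, h5, h6, h7⟩ := h3 a ha b hb hab
  exact ⟨l, h4, h5, h6, by omega⟩

theorem card_le_of_sub {Ω : Finset V} {l : List V} (h : ∀ x ∈ Ω, x ∈ l) : Ω.card ≤ l.length := by
  calc Ω.card ≤ l.toFinset.card := Finset.card_le_card (fun x hx => by simpa using h x hx)
    _ ≤ l.length := List.toFinset_card_le l

theorem length_le_of_sub {Ω : Finset V} {l : List V} (hd : l.Nodup) (h : ∀ x ∈ l, x ∈ Ω) :
    l.length ≤ Ω.card := by
  rw [← List.toFinset_card_of_nodup hd]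
  exact Finset.card_le_card (fun x hx => h x (by simpa using hx))

theorem dO_le_dg {G : SimpleGraph V} {Ω : Finset V} {Z : List V} {v : V}
    (h : ∀ x ∈ Ω, G.Adj v x → x ∈ Z) : dO G Ω v ≤ dg G Z v := by
  unfold dO dg
  rw [List.countP_eq_length_filter]
  apply card_le_of_sub
  intro x hx
  simp at hx ⊢
  exact ⟨h x hx.1 hx.2, hx.2⟩

theorem Good.of_cyc {G : SimpleGraph V} {Hs : Finset V} {Q : List V} {t : ℕ} (hQ : IsCyc G Q)
    (hs : ∀ x ∈ Q, x ∈ Hs) (h : ∀ y ∈ Q, ∀ z ∈ Q, y ≠ z → Pn G Q y z (t + 1)) : Good G Hs t := by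
  refine ⟨Q.toFinset, fun x hx => hs x (by simpa using hx), ?_, ?_⟩
  · rw [List.toFinset_card_of_nodup hQ.2.1]
    obtain ⟨h1, h2, -⟩ := hQ
    rcases Q with _ | ⟨a, _ | ⟨b, Q⟩⟩
    · simp at h1
    · simp at h1
    · obtain ⟨l, h3, h4, h5, h6⟩ := h a (by simp) b (by simp) (by
        rintro rfl
        simp at h2)
      have := (List.Nodup.subperm h4 h5).length_le
      omega
  · intro a ha b hb hab
    obtain ⟨l, h3, h4, h5, h6⟩ := h a (by simpa using ha) b (by simpa using hb) hab
    exact ⟨l, h3, h4, fun x hx => by simpa using h5 hx, h6⟩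

theorem pn_long {G : SimpleGraph V} {Q : List V} {t : ℕ} (hQ : IsCyc G Q) (hl : 2 * t ≤ Q.length)
    {y z : V} (hy : y ∈ Q) (hz : z ∈ Q) (hyz : y ≠ z) : Pn G Q y z (t + 1) := by
  obtain ⟨A, B, h1, h2⟩ := hQ.form2 hy hz hyz
  suffices hs : Pn G (y :: (A ++ z :: B)) y z (t + 1) from hs.mono h2.subset le_rfl
  have := h2.length_eq
  simp at this
  by_cases hAB : B.length ≤ A.length
  · exact h1.pn_arc.mono (by simp) (by omega)
  · exact h1.pn_arc'.mono (by simp) (by omega)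

theorem succ_count (S R : V → Prop) (Z : List V)
    (h : ∀ M v v' N, Z = M ++ v :: v' :: N → S v → R v') (hl : ∀ x ∈ Z.getLast?, ¬ S x) :
    Z.countP (fun v => decide (S v)) ≤ Z.tail.countP (fun v => decide (R v)) := by
  induction Z with
  | nil => simp
  | cons a Z ih =>
    rcases Z with _ | ⟨b, Z⟩
    · simp at hl
      simp [hl]
    · have h1 := ih (fun M v v' N e => h (a :: M) v v' N (by rw [e]; rfl)) (by
        intro x hx
        apply hl
        rw [List.getLast?_cons_cons]
        exact hx)
      have h2 := h [] a b Z rfl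
      simp only [List.tail_cons] at h1 ⊢
      have e1 : (a :: b :: Z).countP (fun v => decide (S v)) =
          (b :: Z).countP (fun v => decide (S v)) + if decide (S a) = true then 1 else 0 :=
        List.countP_cons
      have e2 : (b :: Z).countP (fun v => decide (R v)) =
          Z.countP (fun v => decide (R v)) + if decide (R b) = true then 1 else 0 :=
        List.countP_cons
      rw [e1, e2]
      by_cases hS : S a
      · rw [if_pos (by simpa using hS), if_pos (by simpa using h2 hS)]
        omega
      · rw [if_neg (by simpa using hS)]
        omega

theorem rot {G : SimpleGraph V} {Ω : Finset V} {l : List V} {a e : V} {t : ℕ} (ht : 2 ≤ t)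
    (hP : P G a e l) (hd : l.Nodup) (hl : ∀ x ∈ l, x ∈ Ω)
    (h : ∀ l' e', P G a e' l' → l'.Perm l →
      (∀ x ∈ Ω, G.Adj e' x → x ∈ l) ∧ t ≤ dO G Ω e') : Good G Ω t := by
  have hex : ∃ n, ∃ X w Y e', P G a e' (X ++ w :: Y) ∧ (X ++ w :: Y).Perm l ∧ G.Adj e' w ∧
      X.length = n := by
    obtain ⟨h1, h2⟩ := h l e hP (List.Perm.refl _)
    have : 0 < dO G Ω e := by omega
    obtain ⟨w, hw⟩ := Finset.card_pos.mp this
    simp at hw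
    obtain ⟨X, Y, rfl⟩ := List.append_of_mem (h1 w hw.1 hw.2)
    exact ⟨_, X, w, Y, e, hP, List.Perm.refl _, hw.2, rfl⟩
  have hmin := fun m => Nat.find_min hex (m := m)
  obtain ⟨X, w, Y, e', hP', hp, hadj, hXn⟩ := Nat.find_spec hex
  rw [← hXn] at hmin
  -- any rearranged path extending `X` has all neighbours of its end outside `X`
  have key : ∀ Y' v, P G a v (X ++ Y') → (X ++ Y').Perm l → (∀ x ∈ Ω, G.Adj v x → x ∈ w :: Y) := by
    intro Y' v hv hvp x hx hvx
    have h1 := (h _ _ hv hvp).1 x hx hvx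
    have h2 := hp.symm.subset h1
    rw [List.mem_append] at h2
    rcases h2 with h2 | h2
    · exfalso
      obtain ⟨X1, X2, rfl⟩ := List.append_of_mem h2
      refine hmin X1.length (by simp) ⟨X1, x, X2 ++ Y', v, ?_, ?_, hvx, rfl⟩
      · simpa using hv
      · simpa using hvp
    · exact h2
  have hZP : P G w e' (w :: Y) := hP'.right
  have hZd : (w :: Y).Nodup := (hp.nodup_iff.mpr hd).of_append_right
  have he' := key _ _ hP' hp
  have hde : t ≤ dg G (w :: Y) e' := (h _ _ hP' hp).2.trans (dO_le_dg he')
  have hZ3 : 3 ≤ (w :: Y).length := by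
    have := dg_lt (G := G) (hZP.last_mem)
    omega
  have hcyc : IsCyc G (w :: Y) := IsCyc.of_path hZP hZd hZ3 hadj
  have hsub : ∀ x ∈ w :: Y, x ∈ Ω := fun x hx => hl x (hp.subset (by simp at hx ⊢; tauto))
  apply Good.of_cyc hcyc hsub
  intro y hy z hz hyz
  obtain ⟨R, hR⟩ : ∃ R : V → Prop, ∀ v, R v ↔ t ≤ dg G (w :: Y) v := ⟨_, fun _ => Iff.rfl⟩
  refine lemH ht hcyc R (fun v hv => (hR v).mp hv) ?_ hy hz hyz
  have h1 := succ_count (G.Adj e') R (w :: Y) ?_ ?_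
  · have h2 : Y.countP (fun v => decide (R v)) ≤
        (w :: Y).countP (fun v => decide (R v)) := by
      rw [List.countP_cons]; omega
    unfold dg at hde
    exact (hde.trans h1).trans h2
  · intro M v v' N hZ hv
    have hp2 : P G a e' ((X ++ M) ++ v :: (v' :: N)) := by
      rw [hZ] at hP'
      simpa using hP'
    have hp3 : P G v' e' (v' :: N) := by
      have : P G a e' ((X ++ M ++ [v]) ++ v' :: N) := by simpa using hp2
      exact this.right
    have hp4 := hp2.left.append hv.symm hp3.reverse
    have hp5 : P G a v' (X ++ (M ++ [v] ++ (v' :: N).reverse)) := by simpa using hp4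
    have hpm : (X ++ (M ++ [v] ++ (v' :: N).reverse)).Perm l := by
      refine List.Perm.trans ?_ hp
      rw [hZ, List.perm_iff_count]
      intro x
      simp [List.count_cons]
    rw [hR]
    exact (h _ _ hp5 hpm).2.trans (dO_le_dg (key _ _ hp5 hpm))
  · intro x hx
    rw [hZP.2.2] at hx
    simp at hx
    subst hx
    exact G.irrefl

theorem exists_longest {p : List V → Prop} {N : ℕ} (h : ∃ l, p l) (hb : ∀ l, p l → l.length ≤ N) :
    ∃ l, p l ∧ ∀ l', p l' → l'.length ≤ l.length := by
  by_contra hcon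
  push Not at hcon
  have : ∀ n, ∃ l, p l ∧ n ≤ l.length := by
    intro n
    induction n with
    | zero => obtain ⟨l, hl⟩ := h; exact ⟨l, hl, by omega⟩
    | succ n ih =>
      obtain ⟨l, hl, hn⟩ := ih
      obtain ⟨l', hl', hn'⟩ := hcon l hl
      exact ⟨l', hl', by omega⟩
  obtain ⟨l, hl, hn⟩ := this (N + 1)
  have := hb l hl
  omega

theorem lemD {G : SimpleGraph V} {Hs Ω : Finset V} {t : ℕ} (ht : 1 ≤ t) (hg : ¬ Good G Hs t)
    (hΩ : Ω ⊆ Hs) (hne : Ω.Nonempty) : ∃ x ∈ Ω, dO G Ω x < t := by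
  by_contra hcon
  push Not at hcon
  apply hg
  refine Good.mono ?_ hΩ
  obtain ⟨x, hx⟩ := hne
  by_cases ht2 : 2 ≤ t
  · obtain ⟨l, ⟨⟨a, e, hP⟩, hd, hl⟩, hmax⟩ := exists_longest
      (p := fun l => (∃ a e, P G a e l) ∧ l.Nodup ∧ ∀ x ∈ l, x ∈ Ω) (N := Ω.card)
      ⟨[x], ⟨x, x, P.single G x⟩, by simp, by simpa using hx⟩
      (fun l hl => length_le_of_sub hl.2.1 hl.2.2)
    refine rot ht2 hP hd hl ?_
    intro l' e' hP' hp
    refine ⟨?_, hcon _ (hl _ (hp.subset hP'.last_mem))⟩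
    intro v hv hev
    by_contra hvl
    have := hmax (l' ++ [v]) ⟨⟨a, v, hP'.concat hev⟩, ?_, ?_⟩
    · have := hp.length_eq
      simp at *
      omega
    · rw [List.nodup_append]
      refine ⟨hp.nodup_iff.mpr hd, by simp, ?_⟩
      rintro y hy z hz rfl
      simp at hz
      subst hz
      exact hvl (hp.subset hy)
    · intro y hy
      simp at hy
      rcases hy with hy | rfl
      · exact hl y (hp.subset hy)
      · exact hv
  · have ht1 : t = 1 := by omega
    subst ht1
    have := hcon x hx
    obtain ⟨y, hy⟩ := Finset.card_pos.mp this
    simp at hy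
    refine ⟨{x, y}, ?_, ?_, ?_⟩
    · intro z hz
      simp at hz
      rcases hz with rfl | rfl
      · exact hx
      · exact hy.1
    · rw [Finset.card_pair hy.2.ne]
    · intro a ha b hb hab
      have hadj : G.Adj a b := by
        simp at ha hb
        rcases ha with rfl | rfl <;> rcases hb with rfl | rfl
        · exact absurd rfl hab
        · exact hy.2
        · exact hy.2.symm
        · exact absurd rfl hab
      refine ⟨[a, b], P.cons hadj (P.single G b), by simpa using hab, ?_, by simp⟩
      intro z hz
      simp at hz
      rcases hz with rfl | rfl
      · exact ha
      · exact hb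

theorem lemJ {G : SimpleGraph V} {Ω : Finset V} {Q : List V} {t : ℕ} {u x : V} (ht : 2 ≤ t)
    (hg : ¬ Good G Ω t) (hQ : MaxCyc G (fun v => v ∈ Ω) Q) (hu : u ∈ Q)
    (hx : x ∈ Ω) (hxQ : x ∉ Q) (hux : G.Adj u x) :
    ∃ x0, (∃ l, P G x x0 l ∧ ∀ v ∈ l, v ∈ Ω ∧ v ∉ Q) ∧ dO G Ω x0 < t := by
  by_contra hcon
  push Not at hcon
  obtain ⟨J, hJ⟩ : ∃ J : V → Prop, J = fun x0 => ∃ l, P G x x0 l ∧ ∀ v ∈ l, v ∈ Ω ∧ v ∉ Q :=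
    ⟨_, rfl⟩
  have hJx : J x := by
    rw [hJ]
    exact ⟨[x], P.single G x, by simp [hx, hxQ]⟩
  have hJΩ : ∀ v, J v → v ∈ Ω ∧ v ∉ Q := by
    rw [hJ]
    rintro v ⟨l, h1, h2⟩
    exact h2 v h1.last_mem
  have hJstep : ∀ v w, J v → G.Adj v w → w ∈ Ω → w ∉ Q → J w := by
    rw [hJ]
    rintro v w ⟨l, h1, h2⟩ h3 h4 h5
    refine ⟨l ++ [w], h1.concat h3, ?_⟩
    intro y hy
    simp at hy
    rcases hy with hy | rfl
    · exact h2 y hy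
    · exact ⟨h4, h5⟩
  have hJd : ∀ v, J v → t ≤ dO G Ω v := by
    rw [hJ]
    rintro v ⟨l, h1, h2⟩
    exact hcon v ⟨l, h1, h2⟩
  have huΩ : u ∈ Ω := hQ.2.1 u hu
  obtain ⟨l, ⟨s, e, rfl, hs, hP, hd, hl⟩, hmax⟩ := exists_longest
    (p := fun l => ∃ s e, l = u :: s ∧ s ≠ [] ∧ P G u e (u :: s) ∧ (u :: s).Nodup ∧ ∀ x ∈ s, J x)
    (N := Ω.card)
    ⟨[u, x], [x], x, rfl, by simp, P.cons hux (P.single G x), by simpa using hux.ne,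
      by simpa using hJx⟩
    (by
      rintro l ⟨s, e, rfl, hs, hP, hd, hl⟩
      apply length_le_of_sub hd
      intro v hv
      simp at hv
      rcases hv with rfl | hv
      · exact huΩ
      · exact (hJΩ v (hl v hv)).1)
  -- rearrangements
  have hre : ∀ l' e', P G u e' l' → l'.Perm (u :: s) → ∃ s', l' = u :: s' ∧ s'.Perm s ∧ s' ≠ [] ∧
      e' ∈ s' ∧ J e' ∧ (u :: s').Nodup ∧ ∀ v ∈ Ω, G.Adj e' v → v ∈ s ∨ v ∈ Q := by
    intro l' e' hP' hp
    obtain ⟨s', rfl⟩ := hP'.exists_head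
    have hp' : s'.Perm s := hp.cons_inv
    have hs' : s' ≠ [] := by
      rintro rfl
      simp at hp'
      exact hs hp'
    have hd' : (u :: s').Nodup := hp.nodup_iff.mpr hd
    have he' : e' ∈ s' := by
      obtain ⟨b, c, h1, h2, h3⟩ := P.of_append (l := [u]) (m := s') hP' (by simp) hs'
      exact h3.last_mem
    have hJe : J e' := hl e' (hp'.subset he')
    refine ⟨s', rfl, hp', hs', he', hJe, hd', ?_⟩
    intro v hv hev
    by_contra hvn
    push Not at hvn
    have hJv := hJstep e' v hJe hev hv hvn.2
    have := hmax (u :: (s' ++ [v])) ⟨s' ++ [v], v, rfl, by simp, hP'.concat hev, ?_, ?_⟩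
    · have := hp'.length_eq
      simp at *
      omega
    · have : ((u :: s') ++ [v]).Nodup := by
        rw [List.nodup_append]
        refine ⟨hd', by simp, ?_⟩
        rintro y hy z hz rfl
        simp at hz
        subst hz
        simp at hy
        rcases hy with rfl | hy
        · exact hvn.2 hu
        · exact hvn.1 (hp'.subset hy)
      simpa using this
    · intro y hy
      simp at hy
      rcases hy with hy | rfl
      · exact hl y (hp'.subset hy)
      · exact hJv
  by_cases hw : ∃ l' e', P G u e' l' ∧ l'.Perm (u :: s) ∧ ∃ w ∈ Q, w ≠ u ∧ G.Adj e' w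
  · obtain ⟨l', e', hP', hp, w, hwQ, hwu, hew⟩ := hw
    obtain ⟨s', rfl, hp', hs', he', hJe, hd', hnb⟩ := hre l' e' hP' hp
    have hsl := hp'.length_eq
    have hJs : ∀ v ∈ s', J v := fun v hv => hl v (hp'.subset hv)
    let W : Finset V := Ω.filter (fun v => v ∈ Q ∧ v ≠ u ∧ G.Adj e' v)
    have hWdef : ∀ v, v ∈ W ↔ v ∈ Ω ∧ v ∈ Q ∧ v ≠ u ∧ G.Adj e' v := by
      intro v; simp [W]
    have huW : u ∉ W := by rw [hWdef]; tauto
    have hwW : w ∈ W := by rw [hWdef]; exact ⟨hQ.2.1 w hwQ, hwQ, hwu, hew⟩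
    have hdle : t ≤ s'.length + W.card := by
      refine (hJd e' hJe).trans ?_
      have hsub : Ω.filter (fun v => G.Adj e' v) ⊆ insert u ((s'.toFinset.erase e') ∪ W) := by
        intro v hv
        simp at hv
        have := hnb v hv.1 hv.2
        have hve : v ≠ e' := hv.2.ne'
        simp only [Finset.mem_insert, Finset.mem_union, Finset.mem_erase, List.mem_toFinset, hWdef]
        rcases this with h | h
        · exact Or.inr (Or.inl ⟨hve, hp'.symm.subset h⟩)
        · by_cases hvu : v = u
          · exact Or.inl hvu
          · exact Or.inr (Or.inr ⟨hv.1, h, hvu, hv.2⟩)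
      have h1 := Finset.card_le_card hsub
      have h2 := Finset.card_insert_le u ((s'.toFinset.erase e') ∪ W)
      have h3 := Finset.card_union_le (s'.toFinset.erase e') W
      have h4 : (s'.toFinset.erase e').card = s'.length - 1 := by
        rw [Finset.card_erase_of_mem (by simpa using he'),
          List.toFinset_card_of_nodup (List.nodup_cons.mp hd').2]
      have h5 : 0 < s'.length := List.length_pos_iff.mpr hs'
      unfold dO
      omega
    have hearu : ∀ v ∈ W, Ear G (fun v => v ∈ Ω) Q u v (s'.length + 1) := by
      intro v hv
      rw [hWdef] at hv
      refine ⟨s', hP'.concat hv.2.2.2, (List.nodup_cons.mp hd').2, ?_, le_rfl⟩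
      intro y hy
      exact (hJΩ y (hJs y hy)).symm
    have hq := ear_weights hQ (insert u W) (fun v => v) (fun a _ b _ h => h) (by
        intro y hy
        simp [hWdef] at hy
        rcases hy with rfl | hy
        · exact hu
        · exact hy.2.1) (fun v => if v = u then 2 * s'.length else 2) (by
        rw [Finset.card_insert_of_notMem huW]
        have := Finset.card_pos.mpr ⟨w, hwW⟩
        omega) (by
        intro y hy y' hy' hyy
        rw [Finset.mem_insert] at hy hy'
        rcases hy with rfl | hy <;> rcases hy' with rfl | hy'
        · exact absurd rfl hyy
        · refine ⟨_, hearu y' hy', ?_⟩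
          have : y' ≠ y := fun h => hyy h.symm
          simp [this]
          omega
        · refine ⟨_, (hearu y hy).symm, ?_⟩
          simp [hyy]
          omega
        · have h1 : y ≠ u := fun h => huW (h ▸ hy)
          have h2 : y' ≠ u := fun h => huW (h ▸ hy')
          rw [hWdef] at hy hy'
          refine ⟨2, ⟨[e'], ?_, by simp, ?_, by simp⟩, by simp [h1, h2]⟩
          · exact P.cons hy.2.2.2.symm (P.cons hy'.2.2.2 (P.single G y'))
          · simp
            exact (hJΩ e' hJe).symm)
    rw [Finset.sum_insert huW] at hq
    have hsum : ∑ v ∈ W, (if v = u then 2 * s'.length else 2) = 2 * W.card := by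
      rw [Finset.sum_congr rfl (g := fun _ => 2)]
      · simp; ring
      · intro v hv
        have : v ≠ u := fun h => huW (h ▸ hv)
        simp [this]
    rw [hsum] at hq
    simp at hq
    apply hg
    exact Good.of_cyc hQ.1 hQ.2.1 (fun y hy z hz hyz => pn_long hQ.1 (by omega) hy hz hyz)
  · push Not at hw
    apply hg
    refine rot ht hP hd ?_ ?_
    · intro v hv
      simp at hv
      rcases hv with rfl | hv
      · exact huΩ
      · exact (hJΩ v (hl v hv)).1
    · intro l' e' hP' hp
      obtain ⟨s', rfl, hp', hs', he', hJe, hd', hnb⟩ := hre l' e' hP' hp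
      refine ⟨?_, hJd e' hJe⟩
      intro v hv hev
      rcases hnb v hv hev with h | h
      · simp [h]
      · by_cases hvu : v = u
        · simp [hvu]
        · exact absurd hev (hw _ _ hP' hp v h hvu)

end NK

namespace NK
open scoped Classical

/-- restriction of a graph to the vertices satisfying `p` -/
def rg (G : SimpleGraph V) (p : V → Prop) : SimpleGraph V where
  Adj u v := G.Adj u v ∧ p u ∧ p v
  symm := ⟨fun _ _ h => ⟨h.1.symm, h.2.2, h.2.1⟩⟩
  loopless := ⟨fun _ h => G.irrefl h.1⟩

theorem rg_to {G : SimpleGraph V} {p : V → Prop} {a b : V} {l : List V} (h : P (rg G p) a b l) :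
    P G a b l := h.mono_mem (fun _ _ _ _ h => h.1)

theorem rg_of {G : SimpleGraph V} {p : V → Prop} {a b : V} {l : List V} (h : P G a b l)
    (hp : ∀ x ∈ l, p x) : P (rg G p) a b l :=
  h.mono_mem (fun x hx y hy h => ⟨h, hp x hx, hp y hy⟩)

theorem rg_mem {G : SimpleGraph V} {p : V → Prop} {a b : V} {l : List V} (h : P (rg G p) a b l)
    (hb : p b) : ∀ x ∈ l, p x := by
  intro x hx
  obtain ⟨l1, l2, rfl⟩ := List.append_of_mem hx
  have h1 := h.right
  rcases l2 with _ | ⟨y, l2⟩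
  · have := h.eq_of_concat
    exact this ▸ hb
  · have h2 := h1.1
    rw [List.isChain_cons_cons] at h2
    exact h2.1.2.1

variable [Fintype V]

set_option linter.unusedSectionVars false

theorem exists_finset (p : V → Prop) : ∃ S : Finset V, ∀ v, v ∈ S ↔ p v :=
  ⟨Finset.univ.filter p, fun v => by rw [Finset.mem_filter]; simp⟩

noncomputable def NB (G : SimpleGraph V) (Ω : Finset V) : Finset V :=
  Finset.univ.filter (fun v => v ∉ Ω ∧ ∃ x ∈ Ω, G.Adj v x)

theorem mem_NB {G : SimpleGraph V} {Ω : Finset V} {v : V} :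
    v ∈ NB G Ω ↔ v ∉ Ω ∧ ∃ x ∈ Ω, G.Adj v x := by simp [NB]

structure MinO (G : SimpleGraph V) (Hs Z Ω : Finset V) : Prop where
  sub : Z ⊆ Ω
  subH : Ω ⊆ Hs
  min1 : ∀ Ω', Z ⊆ Ω' → Ω' ⊆ Hs → (NB G Ω).card ≤ (NB G Ω').card
  min2 : ∀ Ω', Z ⊆ Ω' → Ω' ⊆ Hs → (NB G Ω').card ≤ (NB G Ω).card → Ω.card ≤ Ω'.card

theorem exists_minO (G : SimpleGraph V) {Hs Z : Finset V} (h : Z ⊆ Hs) :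
    ∃ Ω, MinO G Hs Z Ω := by
  obtain ⟨Ω, h1, h2⟩ := Finset.exists_min_image
    (Finset.univ.filter (fun Ω : Finset V => Z ⊆ Ω ∧ Ω ⊆ Hs))
    (fun Ω => (NB G Ω).card * (Fintype.card V + 1) + Ω.card) ⟨Z, by simp [h]⟩
  simp at h1 h2
  refine ⟨Ω, h1.1, h1.2, ?_, ?_⟩
  · intro Ω' h3 h4
    have h5 := h2 Ω' h3 h4
    have h6 := Finset.card_le_univ Ω'
    by_contra hcon
    push Not at hcon
    have : ((NB G Ω').card + 1) * (Fintype.card V + 1) ≤ (NB G Ω).card * (Fintype.card V + 1) :=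
      Nat.mul_le_mul_right _ hcon
    nlinarith
  · intro Ω' h3 h4 h7
    have h5 := h2 Ω' h3 h4
    have := Nat.mul_le_mul_right (Fintype.card V + 1) h7
    omega

/-- access path from `y` to `u ∈ Z` through `Ω ∖ Z` -/
def Acc (G : SimpleGraph V) (Ω Z : Finset V) (y u : V) (s : List V) : Prop :=
  P G y u (y :: (s ++ [u])) ∧ (∀ x ∈ s, x ∈ Ω ∧ x ∉ Z) ∧ s.Nodup ∧ u ∈ Z

noncomputable def EE (G : SimpleGraph V) (Ω Z : Finset V) (y : V) : Finset V :=
  Z.filter (fun u => ∃ s, Acc G Ω Z y u s)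

theorem mem_EE {G : SimpleGraph V} {Ω Z : Finset V} {y u : V} :
    u ∈ EE G Ω Z y ↔ ∃ s, Acc G Ω Z y u s := by
  simp only [EE, Finset.mem_filter]
  constructor
  · exact fun h => h.2
  · rintro ⟨s, h⟩
    exact ⟨h.2.2.2, s, h⟩

theorem acc_of_path {G : SimpleGraph V} {Ω Z : Finset V} {y z : V} {l : List V} (hy : y ∉ Z)
    (h : P G y z l) (hz : z ∈ Z) (hl : ∀ x ∈ l, x = y ∨ x ∈ Ω) :
    ∃ u s, Acc G Ω Z y u s ∧ u ∈ l ∧ s ⊆ l := by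
  obtain ⟨a, ha, u, hu, m, h1, h2, h3, h4, h5⟩ := h.polish (A := {y}) (B := Z) (by simp) hz
  simp at ha
  subst ha
  have hau : a ≠ u := fun h => hy (h ▸ hu)
  obtain ⟨s, rfl⟩ := h1.exists_both hau
  refine ⟨u, s, ⟨h1, ?_, ?_, hu⟩, h3 (by simp), fun x hx => h3 (by simp [hx])⟩
  · intro x hx
    simp at h2
    refine ⟨?_, ?_⟩
    · rcases hl x (h3 (by simp [hx])) with rfl | h
      · exact absurd hx h2.1.1
      · exact h
    · intro hxZ
      have := h5 x (by simp [hx]) hxZ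
      subst this
      rw [List.nodup_append] at h2
      exact h2.2.2.2 x hx x (by simp) rfl
  · simp at h2
    exact h2.2.of_append_left

/-- part of `Ω` which reaches `Z'` inside `Ω` avoiding `X` -/
noncomputable def rch (G : SimpleGraph V) (Ω Z' X : Finset V) : Finset V :=
  Ω.filter (fun v => ∃ z ∈ Z', ∃ l, P G v z l ∧ ∀ x ∈ l, x ∈ Ω ∧ x ∉ X)

theorem mem_rch {G : SimpleGraph V} {Ω Z' X : Finset V} {v : V} :
    v ∈ rch G Ω Z' X ↔ ∃ z ∈ Z', ∃ l, P G v z l ∧ ∀ x ∈ l, x ∈ Ω ∧ x ∉ X := by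
  simp only [rch, Finset.mem_filter]
  constructor
  · exact fun h => h.2
  · rintro ⟨z, hz, l, h1, h2⟩
    exact ⟨(h2 v h1.head_mem).1, z, hz, l, h1, h2⟩

theorem rch_sub {G : SimpleGraph V} {Ω Z' X : Finset V} : rch G Ω Z' X ⊆ Ω :=
  Finset.filter_subset _ _

theorem sub_rch {G : SimpleGraph V} {Ω Z' X : Finset V} (h : Z' ⊆ Ω) (h' : ∀ x ∈ Z', x ∉ X) :
    Z' ⊆ rch G Ω Z' X := by
  intro z hz
  rw [mem_rch]
  exact ⟨z, hz, [z], P.single G z, by simpa using ⟨h hz, h' z hz⟩⟩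

theorem NB_rch {G : SimpleGraph V} {Ω Z' X : Finset V} {w : V} (h : w ∈ NB G (rch G Ω Z' X)) :
    w ∈ X ∨ (w ∈ NB G Ω ∧ ∃ z ∈ Z', ∃ l, P G w z (w :: l) ∧ ∀ x ∈ l, x ∈ Ω ∧ x ∉ X) := by
  rw [mem_NB] at h
  obtain ⟨h1, x, h2, h3⟩ := h
  have hx := rch_sub h2
  rw [mem_rch] at h2
  obtain ⟨z, hz, l, h4, h5⟩ := h2
  by_cases hwX : w ∈ X
  · exact Or.inl hwX
  · right
    refine ⟨?_, z, hz, l, P.cons h3 h4, h5⟩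
    rw [mem_NB]
    refine ⟨?_, x, hx, h3⟩
    intro hw
    apply h1
    rw [mem_rch]
    refine ⟨z, hz, w :: l, P.cons h3 h4, ?_⟩
    intro v hv
    rw [List.mem_cons] at hv
    rcases hv with rfl | hv
    · exact ⟨hw, hwX⟩
    · exact h5 v hv

theorem notMem_of_NB {G : SimpleGraph V} {Ω : Finset V} {y : V} (h : y ∈ NB G Ω) : y ∉ Ω :=
  (mem_NB.mp h).1

theorem cut {G : SimpleGraph V} {Ω Z S : Finset V} {ν : ℕ} (hZ : Z ⊆ Ω) (hS : S ⊆ Z) (hne : S ≠ Z)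
    (hν : ∀ Ω', Ω'.Nonempty → Ω' ⊆ Ω → ν ≤ (NB G Ω').card) :
    ν ≤ S.card + ((NB G Ω).filter (fun y => ¬ EE G Ω Z y ⊆ S)).card := by
  have hex : ∃ z ∈ Z, z ∉ S := by
    by_contra hcon
    push Not at hcon
    exact hne (Finset.Subset.antisymm hS hcon)
  obtain ⟨z, hz, hzS⟩ := hex
  have h1 : Z \ S ⊆ rch G Ω (Z \ S) S :=
    sub_rch (Finset.sdiff_subset.trans hZ) (fun x hx => (Finset.mem_sdiff.mp hx).2)
  refine (hν (rch G Ω (Z \ S) S) ⟨z, h1 (by simp [hz, hzS])⟩ rch_sub).trans ?_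
  refine (Finset.card_le_card ?_).trans (Finset.card_union_le _ _)
  intro w hw
  rw [Finset.mem_union, Finset.mem_filter]
  rcases NB_rch hw with h | ⟨h2, z', hz', l, h3, h4⟩
  · exact Or.inl h
  · refine Or.inr ⟨h2, ?_⟩
    rw [Finset.mem_sdiff] at hz'
    have hwΩ := notMem_of_NB h2
    obtain ⟨u, s, h5, h6, h7⟩ := acc_of_path (Ω := Ω) (Z := Z) (fun h => hwΩ (hZ h)) h3 hz'.1 (by
      intro x hx
      rw [List.mem_cons] at hx
      rcases hx with rfl | hx
      · exact Or.inl rfl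
      · exact Or.inr (h4 x hx).1)
    intro hsub
    have hu : u ∈ EE G Ω Z w := mem_EE.mpr ⟨s, h5⟩
    have huS := hsub hu
    rw [List.mem_cons] at h6
    rcases h6 with rfl | h6
    · exact hwΩ (hZ h5.2.2.2)
    · exact (h4 u h6).2 huS

theorem EE_nonempty {G : SimpleGraph V} {Hs Ω Z : Finset V} (h : MinO G Hs Z Ω) {y : V}
    (hy : y ∈ NB G Ω) : (EE G Ω Z y).Nonempty := by
  have h1 : Z ⊆ rch G Ω Z ∅ := sub_rch h.sub (by simp)
  have h2 : NB G (rch G Ω Z ∅) ⊆ NB G Ω := by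
    intro w hw
    rcases NB_rch hw with h | h
    · simp at h
    · exact h.1
  have h3 := h.min2 _ h1 (rch_sub.trans h.subH) (Finset.card_le_card h2)
  have h4 : rch G Ω Z ∅ = Ω := Finset.eq_of_subset_of_card_le rch_sub h3
  rw [← h4] at hy
  rcases NB_rch hy with h5 | ⟨h5, z, hz, l, h6, h7⟩
  · simp at h5
  · have hwΩ := notMem_of_NB h5
    obtain ⟨u, s, h8, -⟩ := acc_of_path (Ω := Ω) (Z := Z) (fun h' => hwΩ (h.sub h')) h6 hz (by
      intro x hx
      rw [List.mem_cons] at hx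
      rcases hx with rfl | hx
      · exact Or.inl rfl
      · exact Or.inr (h7 x hx).1)
    exact ⟨u, mem_EE.mpr ⟨s, h8⟩⟩

/-- the two-link lemma -/
theorem link {G : SimpleGraph V} {Hs Ω Z : Finset V} (h : MinO G Hs Z Ω) {y y' : V}
    (hy : y ∈ NB G Ω) (hy' : y' ∈ NB G Ω) (hyy : y ≠ y') :
    (∃ u, EE G Ω Z y = {u} ∧ EE G Ω Z y' = {u}) ∨
    ∃ a b s s', a ≠ b ∧ Acc G Ω Z y a s ∧ Acc G Ω Z y' b s' ∧ (∀ x ∈ s, x ∉ s') := by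
  have hyΩ := notMem_of_NB hy
  have hyΩ' := notMem_of_NB hy'
  by_cases hsep : ∀ T, Sep (rg G (fun v => v ∈ Ω ∨ v = y ∨ v = y')) Z {y, y'} T → 2 ≤ T.card
  · right
    obtain ⟨I, f, hI, hF⟩ := menger _ _ _ _ hsep
    obtain ⟨J, hJ, g, hJc, hg, hgd⟩ := hF.index_end
    have hJe : J = {y, y'} := Finset.eq_of_subset_of_card_le hJ (by
      rw [hJc, hI, Finset.card_pair hyy])
    subst hJe
    have key : ∀ j ∈ ({y, y'} : Finset V), ∃ a s, Acc G Ω Z j a s ∧ s ⊆ g j ∧ a ∈ g j := by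
      intro j hj
      obtain ⟨a, ha, h1, h2, h3, h4⟩ := hg j hj
      have hj' : j = y ∨ j = y' := by simpa using hj
      have hm := rg_mem h1 (Or.inr hj')
      have hjZ : j ∉ Z := by
        rcases hj' with rfl | rfl
        · exact fun h' => hyΩ (h.sub h')
        · exact fun h' => hyΩ' (h.sub h')
      have h5 := (rg_to h1).reverse
      obtain ⟨u, s, h6, h7, h8⟩ := acc_of_path (Ω := Ω) hjZ h5 ha (by
        intro x hx
        rw [List.mem_reverse] at hx
        rcases hm x hx with h9 | h9
        · exact Or.inr h9
        · exact Or.inl (h4 x hx (by simpa using h9)))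
      exact ⟨u, s, h6, fun x hx => by simpa using h8 hx, by simpa using h7⟩
    obtain ⟨a, s, h1, h2, h3⟩ := key y (by simp)
    obtain ⟨b, s', h1', h2', h3'⟩ := key y' (by simp)
    have hd := hgd y (by simp) y' (by simp) hyy
    refine ⟨a, b, s, s', ?_, h1, h1', ?_⟩
    · rintro rfl
      exact hd a h3 h3'
    · intro x hx hx'
      exact hd x (h2 hx) (h2' hx')
  · left
    push Not at hsep
    obtain ⟨T, hT, hTc⟩ := hsep
    have hit : ∀ j, (j = y ∨ j = y') → ∀ z ∈ Z, ∀ l, P G j z l →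
        (∀ x ∈ l, x ∈ Ω ∨ x = y ∨ x = y') → ∃ x ∈ l, x ∈ T := by
      intro j hj z hz l hl hlm
      exact hT.symm j (by simpa using hj) z hz l (rg_of hl hlm)
    have hitA : ∀ j, (j = y ∨ j = y') → ∀ u s, Acc G Ω Z j u s → ∃ x, (x = j ∨ x ∈ s ∨ x = u) ∧
        x ∈ T := by
      intro j hj u s hA
      obtain ⟨x, hx, hxT⟩ := hit j hj u hA.2.2.2 _ hA.1 (by
        intro x hx
        simp at hx
        rcases hx with rfl | hx | rfl
        · exact Or.inr hj
        · exact Or.inl (hA.2.1 x hx).1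
        · exact Or.inl (h.sub hA.2.2.2))
      simp at hx
      exact ⟨x, hx, hxT⟩
    obtain ⟨u, hu⟩ := EE_nonempty h hy
    obtain ⟨u', hu'⟩ := EE_nonempty h hy'
    obtain ⟨s, hs⟩ := mem_EE.mp hu
    obtain ⟨s', hs'⟩ := mem_EE.mp hu'
    obtain ⟨x, hx, hxT⟩ := hitA y (Or.inl rfl) u s hs
    obtain ⟨x', hx', hxT'⟩ := hitA y' (Or.inr rfl) u' s' hs'
    have hone : ∀ w ∈ T, w = x := by
      intro w hw
      exact Finset.card_le_one.mp (by omega) w hw x hxT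
    have hxx := hone x' hxT'
    subst hxx
    have hxΩ : x' ∈ Ω := by
      rcases hx with rfl | hx | rfl
      · rcases hx' with rfl | hx' | rfl
        · exact absurd rfl hyy
        · exact absurd (hs'.2.1 _ hx').1 hyΩ
        · exact absurd (h.sub hs'.2.2.2) hyΩ
      · exact (hs.2.1 _ hx).1
      · exact h.sub hs.2.2.2
    by_cases hxZ : x' ∈ Z
    · have hsing : ∀ j, (j = y ∨ j = y') → ∀ v ∈ EE G Ω Z j, v = x' := by
        intro j hj v hv
        obtain ⟨r, hr⟩ := mem_EE.mp hv
        obtain ⟨w, hw, hwT⟩ := hitA j hj v r hr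
        have := hone w hwT
        subst this
        rcases hw with rfl | hw | rfl
        · rcases hj with rfl | rfl
          · exact absurd hxΩ hyΩ
          · exact absurd hxΩ hyΩ'
        · exact absurd hxZ (hr.2.1 _ hw).2
        · rfl
      refine ⟨x', ?_, ?_⟩
      · exact Finset.eq_singleton_iff_nonempty_unique_mem.mpr ⟨⟨u, hu⟩, hsing y (Or.inl rfl)⟩
      · exact Finset.eq_singleton_iff_nonempty_unique_mem.mpr ⟨⟨u', hu'⟩, hsing y' (Or.inr rfl)⟩
    · exfalso
      have h1 : Z ⊆ rch G Ω Z {x'} := sub_rch h.sub (by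
        intro z hz
        simp
        rintro rfl
        exact hxZ hz)
      have h2 : NB G (rch G Ω Z {x'}) ⊆ insert x' (((NB G Ω).erase y).erase y') := by
        intro w hw
        rcases NB_rch hw with h3 | ⟨h3, z, hz, l, h4, h5⟩
        · simp at h3
          simp [h3]
        · have hno : ¬ (w = y ∨ w = y') := by
            intro hwj
            obtain ⟨v, hv, hvT⟩ := hit w hwj z hz _ h4 (by
              intro v hv
              rw [List.mem_cons] at hv
              rcases hv with rfl | hv
              · exact Or.inr hwj
              · exact Or.inl (h5 v hv).1)
            have := hone v hvT
            subst this
            rw [List.mem_cons] at hv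
            rcases hv with rfl | hv
            · rcases hwj with rfl | rfl
              · exact hyΩ hxΩ
              · exact hyΩ' hxΩ
            · have := (h5 v hv).2
              simp at this
          push Not at hno
          simp [h3, hno]
      have h3 := Finset.card_le_card h2
      have h4 := h.min1 _ h1 (rch_sub.trans h.subH)
      have h5 := Finset.card_insert_le x' (((NB G Ω).erase y).erase y')
      rw [Finset.card_erase_of_mem (by simp [hy', hyy.symm]), Finset.card_erase_of_mem hy] at h5
      have h6 : 2 ≤ (NB G Ω).card := by
        rw [← Finset.card_pair hyy]
        apply Finset.card_le_card
        intro v hv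
        simp at hv
        rcases hv with rfl | rfl
        · exact hy
        · exact hy'
      omega

/-- feet on the cycle -/
theorem feet {G : SimpleGraph V} {Hs Ω Z : Finset V} {C : List V} (hH : ∀ v, v ∈ Hs ↔ v ∉ C)
    (h : MinO G Hs Z Ω) : ∃ φ : V → V, Set.InjOn φ (NB G Ω) ∧ (∀ y ∈ NB G Ω, φ y ∈ C) ∧
      ∀ y ∈ NB G Ω, ∀ y' ∈ NB G Ω, y ≠ y' → ∀ s, P G y y' (y :: (s ++ [y'])) → s.Nodup →
        (∀ x ∈ s, x ∈ Ω) → Ear G (fun _ => True) C (φ y) (φ y') (s.length + 1) := by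
  have hsep : ∀ T, Sep (rg G (fun v => v ∉ Ω)) C.toFinset (NB G Ω) T → (NB G Ω).card ≤ T.card := by
    intro T hT
    obtain ⟨Ω1, hΩ1⟩ : ∃ Ω1 : Finset V, ∀ v, v ∈ Ω1 ↔ (v ∈ Ω ∨ ∃ a ∈ NB G Ω, ∃ l,
        P (rg G (fun v => v ∉ Ω)) a v l ∧ ∀ x ∈ l, x ∉ T) :=
      exists_finset _
    have h1 : Ω ⊆ Ω1 := fun v hv => (hΩ1 v).mpr (Or.inl hv)
    have h2 : Ω1 ⊆ Hs := by
      intro v hv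
      rcases (hΩ1 v).mp hv with hv | ⟨a, ha, l, h3, h4⟩
      · exact h.subH hv
      · rw [hH]
        intro hvC
        obtain ⟨x, hx, hxT⟩ := hT.symm a ha v (by simpa using hvC) l h3
        exact h4 x hx hxT
    refine (h.min1 Ω1 (h.sub.trans h1) h2).trans (Finset.card_le_card ?_)
    intro w hw
    by_contra hwT
    rw [mem_NB] at hw
    obtain ⟨h3, x, h4, h5⟩ := hw
    have hwΩ : w ∉ Ω := fun hw' => h3 (h1 hw')
    by_cases hxΩ : x ∈ Ω
    · apply h3
      rw [hΩ1]
      exact Or.inr ⟨w, mem_NB.mpr ⟨hwΩ, x, hxΩ, h5⟩, [w], P.single _ w, by simpa using hwT⟩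
    · rcases (hΩ1 x).mp h4 with hx | ⟨a, ha, l, h6, h7⟩
      · exact hxΩ hx
      · apply h3
        rw [hΩ1]
        refine Or.inr ⟨a, ha, l ++ [w], h6.concat ⟨h5.symm, hxΩ, hwΩ⟩, ?_⟩
        intro v hv
        simp at hv
        rcases hv with hv | rfl
        · exact h7 v hv
        · exact hwT
  obtain ⟨I, f, hI, hF⟩ := menger _ _ _ _ hsep
  obtain ⟨J, hJ, g, hJc, hg, hgd⟩ := hF.index_end
  have hJe : J = NB G Ω := Finset.eq_of_subset_of_card_le hJ (by omega)
  subst hJe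
  have h1 : ∀ y ∈ NB G Ω, ∃ a, a ∈ C ∧ P G a y (g y) ∧ (g y).Nodup ∧
      (∀ x ∈ g y, x ∈ C → x = a) ∧ (∀ x ∈ g y, x ∉ Ω) := by
    intro y hy
    obtain ⟨a, ha, h1, h2, h3, h4⟩ := hg y hy
    exact ⟨a, by simpa using ha, rg_to h1, h2, fun x hx hxC => h3 x hx (by simpa using hxC),
      rg_mem h1 (notMem_of_NB hy)⟩
  choose! φ hφ1 hφ2 hφ3 hφ4 hφ5 using h1
  refine ⟨φ, ?_, hφ1, ?_⟩
  · intro y hy y' hy' heq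
    by_contra hne
    refine hgd y hy y' hy' hne (φ y) (hφ2 y hy).head_mem ?_
    rw [heq]
    exact (hφ2 y' hy').head_mem
  · intro y hy y' hy' hne s hs hsd hsΩ
    obtain ⟨t, ht⟩ := (hφ2 y hy).exists_head
    obtain ⟨t', ht'⟩ := (hφ2 y' hy').exists_head
    have p1 := hφ2 y hy
    have p2 := hφ2 y' hy'
    have d1 := hφ3 y hy
    have d2 := hφ3 y' hy'
    have c1 := hφ4 y hy
    have c2 := hφ4 y' hy'
    have o1 := hφ5 y hy
    have o2 := hφ5 y' hy'
    have dd := hgd y hy y' hy' hne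
    rw [ht] at p1 d1 c1 o1 dd
    rw [ht'] at p2 d2 c2 o2 dd
    refine ⟨t ++ s ++ t'.reverse, ?_, ?_, ?_, by simp; omega⟩
    · have hall : P G (φ y) (φ y') ((φ y :: t) ++ (s ++ (φ y' :: t').reverse)) := by
        rcases s with _ | ⟨a, s⟩
        · have hadj : G.Adj y y' := by
            have := hs.1
            simpa using this
          simpa using p1.append hadj p2.reverse
        · have e1 : P G y y' ([y] ++ ((a :: s) ++ [y'])) := by simpa using hs
          obtain ⟨b, c, q1, q2, q3⟩ := e1.of_append (by simp) (by simp)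
          obtain ⟨b', c', q4, q5, q6⟩ := q3.of_append (by simp) (by simp)
          have e2 : b = y := by have := q1.2.2; simp at this; exact this.symm
          have e3 : c' = y' := by have := q6.2.2; simp at this; have := q6.2.1; simp at this; exact this.symm
          subst e2 e3
          exact p1.append q2 (q4.append q5 p2.reverse)
      simpa using hall
    · rw [List.nodup_append, List.nodup_append]
      simp only [List.nodup_cons] at d1 d2
      refine ⟨⟨d1.2, hsd, ?_⟩, by simpa using d2.2, ?_⟩
      · rintro a ha b hb rfl
        exact o1 a (by simp [ha]) (hsΩ a hb)
      · rintro a ha b hb rfl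
        simp at ha hb
        rcases ha with ha | ha
        · exact dd a (by simp [ha]) (by simp [hb])
        · exact o2 a (by simp [hb]) (hsΩ a ha)
    · intro x hx
      refine ⟨?_, trivial⟩
      intro hxC
      simp only [List.nodup_cons] at d1 d2
      simp at hx
      rcases hx with hx | hx | hx
      · have := c1 x (by simp [hx]) hxC
        subst this
        exact d1.1 hx
      · exact (hH x).mp (h.subH (hsΩ x hx)) hxC
      · have := c2 x (by simp [hx]) hxC
        subst this
        exact d2.1 hx

theorem acc_same {G : SimpleGraph V} {Ω Z : Finset V} (hZ : Z ⊆ Ω) {y y' u : V} {s s' : List V}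
    (h : Acc G Ω Z y u s) (h' : Acc G Ω Z y' u s') :
    ∃ r, P G y y' (y :: (r ++ [y'])) ∧ r.Nodup ∧ (∀ x ∈ r, x ∈ Ω) ∧ 1 ≤ r.length := by
  have e1 : P G y u ([y] ++ (s ++ [u])) := by simpa using h.1
  have e2 : P G y' u ([y'] ++ (s' ++ [u])) := by simpa using h'.1
  obtain ⟨b, c, q1, q2, q3⟩ := e1.of_append (by simp) (by simp)
  obtain ⟨b', c', q1', q2', q3'⟩ := e2.of_append (by simp) (by simp)
  have e3 : b = y := by have := q1.2.2; simp at this; exact this.symm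
  have e4 : b' = y' := by have := q1'.2.2; simp at this; exact this.symm
  subst e3 e4
  obtain ⟨k, h1, h2⟩ := q3.trans q3'.reverse
  obtain ⟨r, h3, h4, h5, -⟩ := h1.extract
  refine ⟨r, ?_, h4, ?_, List.length_pos_iff.mpr h3.ne_nil⟩
  · have := P.cons q2 (h3.concat q2'.symm)
    simpa using this
  · intro x hx
    have := h2 x (h5 hx)
    simp at this
    have hu := hZ h.2.2.2
    rcases this with (h6 | rfl) | (rfl | h6)
    · exact (h.2.1 x h6).1
    · exact hu
    · exact hu
    · exact (h'.2.1 x h6).1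

theorem acc_link {G : SimpleGraph V} {Ω Z : Finset V} (hZ : Z ⊆ Ω) {y y' a b : V} {s s' m : List V}
    (h : Acc G Ω Z y a s) (h' : Acc G Ω Z y' b s') (hd : ∀ x ∈ s, x ∉ s')
    (hm : P G a b m) (hmd : m.Nodup) (hmZ : ∀ x ∈ m, x ∈ Z) :
    ∃ r, P G y y' (y :: (r ++ [y'])) ∧ r.Nodup ∧ (∀ x ∈ r, x ∈ Ω) ∧ m.length ≤ r.length := by
  have e1 : P G y a ((y :: s) ++ [a]) := by simpa using h.1
  have e2 : P G y' b ((y' :: s') ++ [b]) := by simpa using h'.1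
  obtain ⟨c, d, q1, q2, q3⟩ := e1.of_append (by simp) (by simp)
  obtain ⟨c', d', q1', q2', q3'⟩ := e2.of_append (by simp) (by simp)
  have e3 : d = a := by have := q3.2.1; simp at this; exact this.symm
  have e4 : d' = b := by have := q3'.2.1; simp at this; exact this.symm
  subst e3 e4
  refine ⟨s ++ m ++ s'.reverse, ?_, ?_, ?_, by simp; omega⟩
  · have := q1.append q2 (hm.append q2'.symm q1'.reverse)
    simpa using this
  · rw [List.nodup_append, List.nodup_append]
    refine ⟨⟨h.2.2.1, hmd, ?_⟩, by simpa using h'.2.2.1, ?_⟩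
    · rintro v hv w hw rfl
      exact (h.2.1 v hv).2 (hmZ v hw)
    · rintro v hv w hw rfl
      simp at hv hw
      rcases hv with hv | hv
      · exact hd v hv hw
      · exact (h'.2.1 v hw).2 (hmZ v hv)
  · intro x hx
    simp at hx
    rcases hx with hx | hx | hx
    · exact (h.2.1 x hx).1
    · exact hZ (hmZ x hx)
    · exact (h'.2.1 x hx).1

end NK

namespace NK
open scoped Classical
variable [Fintype V]

theorem ear_two {G : SimpleGraph V} {Hs Ω Z : Finset V} {C : List V} {φ : V → V}
    (h : MinO G Hs Z Ω)
    (hφ : ∀ y ∈ NB G Ω, ∀ y' ∈ NB G Ω, y ≠ y' → ∀ s, P G y y' (y :: (s ++ [y'])) → s.Nodup →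
        (∀ x ∈ s, x ∈ Ω) → Ear G (fun _ => True) C (φ y) (φ y') (s.length + 1))
    {y y' u : V} (hy : y ∈ NB G Ω) (hy' : y' ∈ NB G Ω) (hyy : y ≠ y')
    (hu : u ∈ EE G Ω Z y) (hu' : u ∈ EE G Ω Z y') : Ear G (fun _ => True) C (φ y) (φ y') 2 := by
  obtain ⟨s, hs⟩ := mem_EE.mp hu
  obtain ⟨s', hs'⟩ := mem_EE.mp hu'
  obtain ⟨r, h1, h2, h3, h4⟩ := acc_same h.sub hs hs'
  exact (hφ y hy y' hy' hyy r h1 h2 h3).mono (by omega)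

theorem lemG {G : SimpleGraph V} {Hs : Finset V} {C : List V} {ν d : ℕ}
    (hC : MaxCyc G (fun _ => True) C) (hH : ∀ v, v ∈ Hs ↔ v ∉ C)
    (hν : ∀ Ω' : Finset V, Ω'.Nonempty → Ω' ⊆ Hs → ν ≤ (NB G Ω').card) (hν2 : 2 ≤ ν)
    (hg : Good G Hs d) : ν * (d + 2) ≤ C.length := by
  obtain ⟨Z, hZH, hZc, hZp⟩ := hg
  obtain ⟨Ω, hΩ⟩ := exists_minO G hZH
  obtain ⟨φ, hφi, hφC, hφ⟩ := feet hH hΩ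
  have hZne : Z.Nonempty := Finset.card_pos.mp (by omega)
  have hYc : ν ≤ (NB G Ω).card := hν Ω (hZne.mono hΩ.sub) hΩ.subH
  have hlink : ∀ y ∈ NB G Ω, ∀ y' ∈ NB G Ω, y ≠ y' →
      ((∃ u, EE G Ω Z y = {u} ∧ EE G Ω Z y' = {u}) ∧ Ear G (fun _ => True) C (φ y) (φ y') 2) ∨
      Ear G (fun _ => True) C (φ y) (φ y') (d + 2) := by
    intro y hy y' hy' hyy
    rcases link hΩ hy hy' hyy with ⟨u, h1, h2⟩ | ⟨a, b, s, s', h1, h2, h3, h4⟩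
    · left
      exact ⟨⟨u, h1, h2⟩, ear_two hΩ hφ hy hy' hyy (u := u) (by rw [h1]; simp) (by rw [h2]; simp)⟩
    · right
      obtain ⟨m, h5, h6, h7, h8⟩ := hZp a h2.2.2.2 b h3.2.2.2 h1
      obtain ⟨r, h9, h10, h11, h12⟩ := acc_link hΩ.sub h2 h3 h4 h5 h6 h7
      exact (hφ y hy y' hy' hyy r h9 h10 h11).mono (by omega)
  have hear2 : ∀ y ∈ NB G Ω, ∀ y' ∈ NB G Ω, y ≠ y' →
      Ear G (fun _ => True) C (φ y) (φ y') 2 := by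
    intro y hy y' hy' hyy
    rcases hlink y hy y' hy' hyy with h | h
    · exact h.2
    · exact h.mono (by omega)
  rcases Nat.eq_zero_or_pos d with rfl | hd
  · have := ear_weights hC (NB G Ω) φ hφi hφC (fun _ => 2) (by omega) (by
      intro y hy y' hy' hyy
      exact ⟨2, hear2 y hy y' hy' hyy, by norm_num⟩)
    simp at this
    omega
  have hE : ∀ y, ∃ e, y ∈ NB G Ω → e ∈ EE G Ω Z y := by
    intro y
    by_cases hy : y ∈ NB G Ω
    · obtain ⟨u, hu⟩ := EE_nonempty hΩ hy
      exact ⟨u, fun _ => hu⟩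
    · exact ⟨y, fun h => absurd h hy⟩
  choose e he using hE
  obtain ⟨Y1, hY1⟩ := exists_finset (fun y => y ∈ NB G Ω ∧ (EE G Ω Z y).card = 1)
  obtain ⟨Y0, hY0⟩ := exists_finset (fun y => y ∈ NB G Ω ∧ (EE G Ω Z y).card ≠ 1)
  have hY01 : NB G Ω = Y0 ∪ Y1 := by
    ext y
    rw [Finset.mem_union, hY0, hY1]
    tauto
  have hdis : Disjoint Y0 Y1 := by
    rw [Finset.disjoint_left]
    intro y h0 h1
    rw [hY0] at h0
    rw [hY1] at h1
    exact h0.2 h1.2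
  have hN : (NB G Ω).card = Y0.card + Y1.card := by
    rw [hY01, Finset.card_union_of_disjoint hdis]
  have hsing : ∀ y ∈ Y1, EE G Ω Z y = {e y} := by
    intro y hy
    rw [hY1] at hy
    obtain ⟨u, hu⟩ := Finset.card_eq_one.mp hy.2
    have := he y hy.1
    rw [hu] at this ⊢
    simp at this
    rw [this]
  have heZ : ∀ y ∈ NB G Ω, e y ∈ Z := fun y hy => by
    obtain ⟨s, hs⟩ := mem_EE.mp (he y hy)
    exact hs.2.2.2
  let cls : V → V ⊕ V := fun y => if (EE G Ω Z y).card = 1 then Sum.inl (e y) else Sum.inr y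
  have hcls : ((NB G Ω).image cls) = (Y1.image e).disjSum Y0 := by
    ext c
    rw [Finset.mem_image, Finset.mem_disjSum]
    constructor
    · rintro ⟨y, hy, rfl⟩
      by_cases h1 : (EE G Ω Z y).card = 1
      · left
        exact ⟨e y, Finset.mem_image.mpr ⟨y, (hY1 y).mpr ⟨hy, h1⟩, rfl⟩, by simp [cls, h1]⟩
      · right
        exact ⟨y, (hY0 y).mpr ⟨hy, h1⟩, by simp [cls, h1]⟩
    · rintro (⟨b, hb, rfl⟩ | ⟨y, hy, rfl⟩)
      · obtain ⟨y, hy, rfl⟩ := Finset.mem_image.mp hb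
        rw [hY1] at hy
        exact ⟨y, hy.1, by simp [cls, hy.2]⟩
      · rw [hY0] at hy
        exact ⟨y, hy.1, by simp [cls, hy.2]⟩
  have hK : ((NB G Ω).image cls).card = (Y1.image e).card + Y0.card := by
    rw [hcls, Finset.card_disjSum]
  have hK2 : ∀ inst : DecidableEq (V ⊕ V), (@Finset.image _ _ inst cls (NB G Ω)).card =
      (Y1.image e).card + Y0.card := by
    intro inst
    rw [← hK]
    congr
    exact Subsingleton.elim _ _
  have hcl : 2 ≤ (Y1.image e).card + Y0.card →
      2 * (NB G Ω).card + d * ((Y1.image e).card + Y0.card) ≤ C.length := by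
    intro h2
    have := ear_classes hC (NB G Ω) φ hφi hφC cls d (by rw [hK2]; exact h2) hear2 (by
      intro y hy y' hy' hyy hcc
      rcases hlink y hy y' hy' hyy with ⟨⟨u, h1, h2⟩, -⟩ | h
      · exfalso
        apply hcc
        have e1 := he y hy
        have e2 := he y' hy'
        rw [h1] at e1
        rw [h2] at e2
        simp at e1 e2
        simp [cls, h1, h2, e1, e2]
      · exact h)
    rw [hK2] at this
    exact this
  have hB1 : Y1.image e ⊆ Z := by
    intro b hb
    obtain ⟨y, hy, rfl⟩ := Finset.mem_image.mp hb
    exact heZ y ((hY1 y).mp hy).1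
  have hν' : ∀ Ω' : Finset V, Ω'.Nonempty → Ω' ⊆ Ω → ν ≤ (NB G Ω').card :=
    fun Ω' h1 h2 => hν Ω' h1 (h2.trans hΩ.subH)
  have fin : ν ≤ (Y1.image e).card + Y0.card → ν * (d + 2) ≤ C.length := by
    intro h
    have h1 := hcl (by omega)
    have h2 := Nat.mul_le_mul_left d h
    nlinarith
  by_cases hBZ : Y1.image e = Z
  · by_cases hKν : ν ≤ (Y1.image e).card + Y0.card
    · exact fin hKν
    · push Not at hKν
      rw [hBZ] at hKν hcl
      have hfib : Y1.card = ∑ b ∈ Z, (Y1.filter (fun y => e y = b)).card := by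
        apply Finset.card_eq_sum_card_fiberwise
        intro y hy
        exact heZ y ((hY1 y).mp hy).1
      have hnb : ∀ b ∈ Z, ν + 1 - (Z.card + Y0.card) ≤ (Y1.filter (fun y => e y = b)).card := by
        intro b hb
        have h1 := cut (S := Z.erase b) hΩ.sub (Finset.erase_subset _ _) (fun h => by
          have := Finset.notMem_erase b Z
          rw [h] at this
          exact this hb) hν'
        rw [Finset.card_erase_of_mem hb] at h1
        have h2 : (NB G Ω).filter (fun y => ¬ EE G Ω Z y ⊆ Z.erase b) ⊆
            Y0 ∪ Y1.filter (fun y => e y = b) := by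
          intro y hy
          rw [Finset.mem_filter] at hy
          rw [Finset.mem_union, Finset.mem_filter]
          by_cases h0 : y ∈ Y0
          · exact Or.inl h0
          · right
            have hy1 : y ∈ Y1 := by
              have := hy.1
              rw [hY01, Finset.mem_union] at this
              tauto
            refine ⟨hy1, ?_⟩
            by_contra hne
            apply hy.2
            rw [hsing y hy1]
            simp [hne, heZ y hy.1]
        have h3 := (Finset.card_le_card h2).trans (Finset.card_union_le _ _)
        have : 0 < Z.card := by omega
        omega
      have h1 : Z.card * (ν + 1 - (Z.card + Y0.card)) ≤ Y1.card := by
        rw [hfib, ← smul_eq_mul]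
        exact Finset.card_nsmul_le_sum _ _ _ hnb
      have h2 := hcl (by omega)
      obtain ⟨t, ht⟩ := Nat.exists_eq_add_of_lt hKν
      have h3 : ν + 1 - (Z.card + Y0.card) = t + 2 := by omega
      rw [h3] at h1
      rw [hN] at h2
      subst ht
      have h4 : (d + 1) * (t + 1) ≤ Z.card * (t + 1) := Nat.mul_le_mul_right _ hZc
      nlinarith
  · apply fin
    have h1 := cut (S := Y1.image e) hΩ.sub hB1 hBZ hν'
    have h2 : (NB G Ω).filter (fun y => ¬ EE G Ω Z y ⊆ Y1.image e) ⊆ Y0 := by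
      intro y hy
      rw [Finset.mem_filter] at hy
      by_contra h0
      have hy1 : y ∈ Y1 := by
        have := hy.1
        rw [hY01, Finset.mem_union] at this
        tauto
      apply hy.2
      rw [hsing y hy1]
      simp
      exact ⟨y, hy1, rfl⟩
    have h3 := Finset.card_le_card h2
    omega

end NK

namespace NK
open scoped Classical

theorem IsCyc.succ {G : SimpleGraph V} {Q : List V} (h : IsCyc G Q) {a : V} (ha : a ∈ Q) :
    ∃ B, IsCyc G (a :: Q.formPerm a :: B) ∧ (a :: Q.formPerm a :: B).Perm Q := by
  obtain ⟨l1, l2, rfl⟩ := List.append_of_mem ha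
  have h1 := h.swap
  have h2 : ((a :: l2) ++ l1).formPerm = (l1 ++ a :: l2).formPerm := by
    rw [← List.rotate_append_length_eq l1 (a :: l2)]
    exact List.formPerm_rotate _ h.2.1 _
  rw [← h2]
  have h3 : ((a :: l2) ++ l1).Perm (l1 ++ a :: l2) := List.perm_append_comm
  rcases hT : l2 ++ l1 with _ | ⟨b, B⟩
  · have := h1.1
    simp at this hT
    simp [hT] at this
  · have h4 : (a :: l2) ++ l1 = a :: b :: B := by simp [hT]
    rw [h4] at h1 h3 ⊢
    rw [List.formPerm_apply_head _ _ _ h1.2.1]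
    exact ⟨B, h1, h3⟩

theorem getD_sum_le (L : List ℤ) (h : ∀ x ∈ L, 0 ≤ x) (j : ℕ) :
    ∑ i ∈ Finset.range j, L.getD i 0 ≤ L.sum := by
  induction L generalizing j with
  | nil => simp
  | cons a L ih =>
    have h1 : ∀ x ∈ L, 0 ≤ x := fun x hx => h x (by simp [hx])
    rcases j with _ | j
    · simp
      have := List.sum_nonneg h1
      have := h a (by simp)
      omega
    · rw [Finset.sum_range_succ']
      have := ih h1 j
      simp at this ⊢
      omega

theorem pair_sum (A B : List V) (f : V → ℤ) (hA : ∀ x ∈ A, 0 ≤ f x) (hB : ∀ x ∈ B, 0 ≤ f x)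
    (j : ℕ) (e : ℤ) (hjA : j ≤ A.length) (hjB : j ≤ B.length)
    (h : ∀ A1 p A2 B1 r B2, A = A1 ++ p :: A2 → B = B1 ++ r :: B2 → A1.length + B1.length + 1 = j →
      e ≤ f p + f r) : j * e ≤ (A.map f).sum + (B.map f).sum := by
  have h1 := getD_sum_le (A.map f) (by simpa using hA) j
  have h2 := getD_sum_le (B.map f) (by simpa using hB) j
  rw [← Finset.sum_range_reflect] at h2
  have h3 : ∑ i ∈ Finset.range j, e ≤
      ∑ i ∈ Finset.range j, ((A.map f).getD i 0 + (B.map f).getD (j - 1 - i) 0) := by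
    apply Finset.sum_le_sum
    intro i hi
    rw [Finset.mem_range] at hi
    have hiA : i < A.length := by omega
    have hiB : j - 1 - i < B.length := by omega
    rw [List.getD_eq_getElem _ _ (by simpa using hiA), List.getD_eq_getElem _ _ (by simpa using hiB),
      List.getElem_map, List.getElem_map]
    apply h (A.take i) A[i] (A.drop (i + 1)) (B.take (j - 1 - i)) B[j - 1 - i]
      (B.drop (j - 1 - i + 1))
    · simp
    · simp
    · simp
      omega
  rw [Finset.sum_add_distrib] at h3
  simp only [Finset.sum_const, Finset.card_range, nsmul_eq_mul] at h3
  omega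

variable [Fintype V]

theorem dO_univ_le {G : SimpleGraph V} {Ω : Finset V} {x : V} {S : Finset V}
    (h : ∀ y, y ∉ Ω → G.Adj x y → y ∈ S) : dO G Finset.univ x ≤ dO G Ω x + S.card := by
  unfold dO
  refine (Finset.card_le_card ?_).trans (Finset.card_union_le _ _)
  intro y hy
  simp at hy
  rw [Finset.mem_union, Finset.mem_filter]
  by_cases hΩ : y ∈ Ω
  · exact Or.inl ⟨hΩ, hy⟩
  · exact Or.inr (h y hΩ hy)

theorem gap3 {G : SimpleGraph V} {Hs Ω : Finset V} {C Q : List V} {φ : V → V}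
    (hQ : MaxCyc G (fun v => v ∈ Hs) Q)
    (hΩ : MinO G Hs Q.toFinset Ω)
    (hφ : ∀ y ∈ NB G Ω, ∀ y' ∈ NB G Ω, y ≠ y' → ∀ s, P G y y' (y :: (s ++ [y'])) → s.Nodup →
        (∀ x ∈ s, x ∈ Ω) → Ear G (fun _ => True) C (φ y) (φ y') (s.length + 1))
    {y y' : V} (hy : y ∈ NB G Ω) (hy' : y' ∈ NB G Ω) (hyy : y ≠ y') :
    ∃ L, Ear G (fun _ => True) C (φ y) (φ y') L ∧
      ((EE G Ω Q.toFinset y).card + 1) + ((EE G Ω Q.toFinset y').card + 1) ≤ 2 * L := by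
  have hEq : ∀ z, EE G Ω Q.toFinset z ⊆ Q.toFinset := fun z => Finset.filter_subset _ _
  have hq : Q.toFinset.card = Q.length := List.toFinset_card_of_nodup hQ.1.2.1
  rcases link hΩ hy hy' hyy with ⟨u, h1, h2⟩ | ⟨a, b, s, s', h1, h2, h3, h4⟩
  · refine ⟨2, ear_two hΩ hφ hy hy' hyy (u := u) (by rw [h1]; simp) (by rw [h2]; simp), ?_⟩
    rw [h1, h2]
    simp
  by_cases hcons : ∃ a' ∈ EE G Ω Q.toFinset y, Q.formPerm a' ∈ EE G Ω Q.toFinset y'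
  · obtain ⟨a', ha', hb'⟩ := hcons
    have haQ : a' ∈ Q := by simpa using hEq _ ha'
    obtain ⟨B, hB1, hB2⟩ := hQ.1.succ haQ
    generalize Q.formPerm a' = b' at *
    obtain ⟨r, hr⟩ := mem_EE.mp ha'
    obtain ⟨r', hr'⟩ := mem_EE.mp hb'
    have hB1' : IsCyc G (a' :: ([] ++ b' :: B)) := hB1
    have hdis : ∀ x ∈ r, x ∉ r' := by
      intro x hx hx'
      obtain ⟨r1, r2, rfl⟩ := List.append_of_mem hx
      obtain ⟨r3, r4, rfl⟩ := List.append_of_mem hx'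
      have p1 : P G x a' (x :: (r2 ++ [a'])) := by
        have : P G y a' ((y :: r1) ++ x :: (r2 ++ [a'])) := by simpa using hr.1
        exact this.right
      have p2 : P G x b' (x :: (r4 ++ [b'])) := by
        have : P G y' b' ((y' :: r3) ++ x :: (r4 ++ [b'])) := by simpa using hr'.1
        exact this.right
      have e1 : P G x a' ((x :: r2) ++ [a']) := by simpa using p1
      have e2 : P G x b' ((x :: r4) ++ [b']) := by simpa using p2
      obtain ⟨c, d, q1, q2, q3⟩ := e1.of_append (by simp) (by simp)
      obtain ⟨c', d', q1', q2', q3'⟩ := e2.of_append (by simp) (by simp)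
      have e3 : d = a' := by have := q3.2.1; simp at this; exact this.symm
      have e4 : d' = b' := by have := q3'.2.1; simp at this; exact this.symm
      subst e3 e4
      obtain ⟨k, k1, k2⟩ := q1.reverse.trans q1'
      obtain ⟨I, i1, i2, i3, -⟩ := k1.extract
      have hear : Ear G (fun v => v ∈ Hs) Q d d' 2 := by
        refine ⟨I, ?_, i2, ?_, ?_⟩
        · have := P.cons q2.symm (i1.concat q2')
          simpa using this
        · intro v hv
          have hv2 := k2 v (i3 hv)
          have : v ∈ Ω ∧ v ∉ Q.toFinset := by
            rcases hv2 with hv2 | hv2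
            · apply hr.2.1
              simp at hv2 ⊢
              tauto
            · apply hr'.2.1
              simp at hv2 ⊢
              tauto
          exact ⟨by simpa using this.2, hΩ.subH this.1⟩
        · have := List.length_pos_iff.mpr i1.ne_nil
          omega
      have := ear_arc hQ hB1' hB2 hear
      simp at this
    obtain ⟨w, w1, w2, w3, w4⟩ := hB1'.pn_arc'
    obtain ⟨k, k1, k2, k3, k4⟩ := acc_link hΩ.sub hr hr' hdis w1 w2 (by
      intro x hx
      simpa using hB2.subset (w3 hx))
    refine ⟨_, hφ y hy y' hy' hyy k k1 k2 k3, ?_⟩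
    have c1 := Finset.card_le_card (hEq y)
    have c2 := Finset.card_le_card (hEq y')
    have c3 := hB2.length_eq
    simp only [List.length_cons] at c3
    omega
  · push Not at hcons
    have hsum : (EE G Ω Q.toFinset y).card + (EE G Ω Q.toFinset y').card ≤ Q.length := by
      rw [← hq, ← Finset.card_image_of_injective (EE G Ω Q.toFinset y) Q.formPerm.injective,
        ← Finset.card_union_of_disjoint]
      · apply Finset.card_le_card
        apply Finset.union_subset
        · intro v hv
          obtain ⟨a', ha', rfl⟩ := Finset.mem_image.mp hv
          have := hEq _ ha'
          simp at this ⊢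
          exact this
        · exact hEq _
      · rw [Finset.disjoint_left]
        intro v hv
        obtain ⟨a', ha', rfl⟩ := Finset.mem_image.mp hv
        exact hcons a' ha'
    obtain ⟨w, w1, w2, w3, w4⟩ := pn_long (t := Q.length / 2) hQ.1 (by omega)
      (y := a) (z := b) (by simpa using h2.2.2.2) (by simpa using h3.2.2.2) h1
    obtain ⟨k, k1, k2, k3, k4⟩ := acc_link hΩ.sub h2 h3 h4 w1 w2 (by
      intro x hx
      simpa using w3 hx)
    exact ⟨_, hφ y hy y' hy' hyy k k1 k2 k3, by omega⟩

theorem case3 {G : SimpleGraph V} {Hs : Finset V} {C : List V} {δ m : ℕ}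
    (hC : MaxCyc G (fun _ => True) C) (hH : ∀ v, v ∈ Hs ↔ v ∉ C)
    (hδ : ∀ v, δ ≤ dO G Finset.univ v) (hm : 3 ≤ m) (hmδ : 2 * m ≤ δ)
    (hg : ¬ Good G Hs (m - 1))
    (hcyc : ∃ Q, IsCyc G Q ∧ (∀ x ∈ Q, x ∈ Hs) ∧ m ≤ Q.length) :
    ((m : ℤ) + 1) * (δ - m + 1) ≤ C.length := by
  obtain ⟨Q0, hQ0, hQ0H, hQ0m⟩ := hcyc
  obtain ⟨Q, ⟨hQ1, hQ2⟩, hQ3⟩ := exists_longest (p := fun l => IsCyc G l ∧ ∀ x ∈ l, x ∈ Hs)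
    (N := Hs.card) ⟨Q0, hQ0, hQ0H⟩ (fun l hl => length_le_of_sub hl.1.2.1 hl.2)
  have hQ : MaxCyc G (fun v => v ∈ Hs) Q := ⟨hQ1, hQ2, fun Q' h1 h2 => hQ3 Q' ⟨h1, h2⟩⟩
  have hqm : m ≤ Q.length := hQ0m.trans (hQ3 Q0 ⟨hQ0, hQ0H⟩)
  have hZH : Q.toFinset ⊆ Hs := fun x hx => hQ2 x (by simpa using hx)
  obtain ⟨Ω, hΩ⟩ := exists_minO G hZH
  obtain ⟨φ, hφi, hφC, hφ⟩ := feet hH hΩ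
  have hZne : Q.toFinset.Nonempty := by
    rw [← Finset.card_pos, List.toFinset_card_of_nodup hQ1.2.1]
    omega
  have hYc : δ + 2 ≤ (NB G Ω).card + m := by
    obtain ⟨x, hx, hxd⟩ := lemD (t := m - 1) (by omega) hg hΩ.subH (hZne.mono hΩ.sub)
    have h1 := dO_univ_le (G := G) (Ω := Ω) (x := x) (S := NB G Ω)
      (fun y h1 h2 => mem_NB.mpr ⟨h1, x, hx, h2.symm⟩)
    have := hδ x
    omega
  have hsum := ear_weights hC (NB G Ω) φ hφi hφC (fun y => (EE G Ω Q.toFinset y).card + 1)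
    (by omega) (fun y hy y' hy' hyy => gap3 hQ hΩ hφ hy hy' hyy)
  obtain ⟨Lab, hLab⟩ : ∃ Lab : V → Finset V,
      Lab = fun u => (NB G Ω).filter (fun y => u ∈ EE G Ω Q.toFinset y) := ⟨_, rfl⟩
  have hmemLab : ∀ u y, y ∈ Lab u ↔ y ∈ NB G Ω ∧ u ∈ EE G Ω Q.toFinset y := by
    intro u y
    rw [hLab, Finset.mem_filter]
  have hdc : ∑ y ∈ NB G Ω, (EE G Ω Q.toFinset y).card = ∑ u ∈ Q.toFinset, (Lab u).card := by
    have h1 : ∀ y ∈ NB G Ω, (EE G Ω Q.toFinset y).card =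
        ∑ u ∈ Q.toFinset, if u ∈ EE G Ω Q.toFinset y then 1 else 0 := by
      intro y _
      rw [← Finset.card_filter]
      congr 1
      ext u
      simp [EE]
    rw [Finset.sum_congr rfl h1, Finset.sum_comm]
    apply Finset.sum_congr rfl
    intro u _
    rw [← Finset.card_filter, hLab]
  rw [Finset.sum_add_distrib, hdc] at hsum
  simp only [Finset.sum_const, smul_eq_mul, mul_one] at hsum
  have hgΩ : ¬ Good G Ω (m - 1) := fun h => hg (h.mono hΩ.subH)
  have hQΩ : MaxCyc G (fun v => v ∈ Ω) Q :=
    ⟨hQ1, fun x hx => hΩ.sub (by simpa using hx), fun Q' h1 h2 =>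
      hQ3 Q' ⟨h1, fun x hx => hΩ.subH (h2 x hx)⟩⟩
  have hlab : ∀ u ∈ Q, δ + 2 ≤ (Lab u).card + m ∨ δ ≤ (Lab u).card + dg G Q u := by
    intro u hu
    have huZ : u ∈ Q.toFinset := by simpa using hu
    by_cases hx : ∃ x, x ∈ Ω ∧ x ∉ Q ∧ G.Adj u x
    · left
      obtain ⟨x, hx1, hx2, hx3⟩ := hx
      obtain ⟨x0, ⟨l, hl1, hl2⟩, hx0⟩ := lemJ (by omega) hgΩ hQΩ hu hx1 hx2 hx3
      have h1 := dO_univ_le (G := G) (Ω := Ω) (x := x0) (S := Lab u) (by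
        intro y hy1 hy2
        rw [hmemLab]
        refine ⟨mem_NB.mpr ⟨hy1, x0, (hl2 x0 hl1.last_mem).1, hy2.symm⟩, ?_⟩
        have hp : P G y u (y :: (l.reverse ++ [u])) :=
          P.cons hy2.symm (hl1.reverse.concat hx3.symm)
        obtain ⟨u', s, hs1, hs2, -⟩ := acc_of_path (Ω := Ω) (Z := Q.toFinset)
          (fun h => hy1 (hΩ.sub h)) hp huZ (by
            intro v hv
            simp at hv
            rcases hv with rfl | hv | rfl
            · exact Or.inl rfl
            · exact Or.inr (hl2 v hv).1
            · exact Or.inr (hΩ.sub huZ))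
        have hu'Z := hs1.2.2.2
        simp at hs2
        rcases hs2 with rfl | hs2 | rfl
        · exact absurd (hΩ.sub hu'Z) hy1
        · exact absurd (by simpa using hu'Z) (hl2 u' hs2).2
        · exact mem_EE.mpr ⟨s, hs1⟩)
      have := hδ x0
      omega
    · right
      push Not at hx
      have h1 := dO_univ_le (G := G) (Ω := Ω) (x := u) (S := Lab u) (by
        intro y hy1 hy2
        rw [hmemLab]
        refine ⟨mem_NB.mpr ⟨hy1, u, hΩ.sub huZ, hy2.symm⟩, ?_⟩
        exact mem_EE.mpr ⟨[], P.cons hy2.symm (P.single G u), by simp, by simp, huZ⟩)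
      have h2 : dO G Ω u ≤ dg G Q u := dO_le_dg (by
        intro x hx1 hx2
        by_contra hx3
        exact hx x hx1 hx3 hx2)
      have := hδ u
      omega
  have hbad : ∃ y ∈ Q, ∃ z ∈ Q, y ≠ z ∧ ¬ Pn G Q y z (m - 1 + 1) := by
    by_contra hcon
    push Not at hcon
    exact hg (Good.of_cyc hQ1 hQ2 hcon)
  obtain ⟨y, hy, z, hz, hyz, hPn⟩ := hbad
  obtain ⟨A, B, hAB, hperm⟩ := hQ1.form2 hy hz hyz
  have hlen := hperm.length_eq
  simp only [List.length_cons, List.length_append] at hlen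
  have hPn' : ∀ n, Pn G (y :: (A ++ z :: B)) y z n → n < m := by
    intro n hn
    by_contra hcon
    exact hPn (hn.mono hperm.subset (by omega))
  have hlA := hPn' _ hAB.pn_arc
  have hlB := hPn' _ hAB.pn_arc'
  obtain ⟨j, hj⟩ := Nat.exists_eq_add_of_le hqm
  -- the excess function
  obtain ⟨f, hf⟩ : ∃ f : V → ℤ, ∀ u, f u = (Lab u).card - ((δ : ℤ) - Q.length + 1) :=
    ⟨_, fun _ => rfl⟩
  have hf0 : ∀ u ∈ Q, 0 ≤ f u := by
    intro u hu
    rw [hf]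
    have h1 := dg_lt (G := G) hu
    rcases hlab u hu with h | h
    · omega
    · omega
  have hpair := pair_sum A B f (fun x hx => hf0 x (hperm.subset (by simp [hx])))
    (fun x hx => hf0 x (hperm.subset (by simp [hx]))) (j + 1) (j + 1) (by omega) (by omega) (by
      rintro A1 p A2 B1 r B2 rfl rfl hlen2
      have hpQ : p ∈ Q := hperm.subset (by simp)
      have hrQ : r ∈ Q := hperm.subset (by simp)
      have hW : ¬ ((A1 ++ p :: A2).length + (B1 ++ r :: B2).length + 3 ≤ dg G Q p + dg G Q r) := by
        intro hd
        rw [← dg_perm hperm, ← dg_perm hperm] at hd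
        have := hPn' _ (lemW hAB hd)
        omega
      have h1 := hf0 p hpQ
      have h2 := hf0 r hrQ
      have h3 := hf p
      have h4 := hf r
      rcases hlab p hpQ with h5 | h5
      · omega
      · rcases hlab r hrQ with h6 | h6
        · omega
        · omega)
  have hfsum : ∑ u ∈ Q.toFinset, f u = f y + f z + ((A.map f).sum + (B.map f).sum) := by
    rw [List.sum_toFinset f hQ1.2.1, ← (hperm.map f).sum_eq]
    simp
    ring
  have hfsum2 : ∑ u ∈ Q.toFinset, f u =
      (∑ u ∈ Q.toFinset, ((Lab u).card : ℤ)) - Q.length * ((δ : ℤ) - Q.length + 1) := by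
    rw [Finset.sum_congr rfl (fun u _ => hf u), Finset.sum_sub_distrib]
    simp only [Finset.sum_const, List.toFinset_card_of_nodup hQ1.2.1, nsmul_eq_mul]
  have hy0 := hf0 y hy
  have hz0 := hf0 z hz
  have hsumZ : (∑ u ∈ Q.toFinset, ((Lab u).card : ℤ)) + ((NB G Ω).card : ℤ) ≤ C.length := by
    exact_mod_cast hsum
  have hYZ : (δ : ℤ) + 2 ≤ (NB G Ω).card + m := by exact_mod_cast hYc
  have hjZ : (Q.length : ℤ) = m + j := by exact_mod_cast hj
  rw [hjZ] at hfsum2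
  push_cast at hpair
  have hmδ' : 2 * (m : ℤ) ≤ δ := by exact_mod_cast hmδ
  have hj0 : (0 : ℤ) ≤ j := by positivity
  have hprod : 0 ≤ (j : ℤ) * ((δ : ℤ) - 2 * m) := mul_nonneg hj0 (by omega)
  nlinarith

end NK

namespace NK
open scoped Classical
variable [Fintype V]

theorem main_list {G : SimpleGraph V} {Hs : Finset V} {C : List V} {l δ n : ℕ}
    (hC : MaxCyc G (fun _ => True) C) (hH : ∀ v, v ∈ Hs ↔ v ∉ C)
    (hδ : ∀ v, δ ≤ dO G Finset.univ v) (hl : 1 ≤ l) (hlδ : l + 1 ≤ δ)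
    (hκ : ∀ Ω : Finset V, Ω.Nonempty → Ω ⊆ Hs → l + 1 ≤ (NB G Ω).card)
    (hn : min l (δ - l) ≤ n)
    (hW : (n = 1 ∧ ∃ v, v ∈ Hs) ∨ (n = 2 ∧ ∃ u v, G.Adj u v ∧ u ∈ Hs ∧ v ∈ Hs) ∨
      (3 ≤ n ∧ ∃ Q, IsCyc G Q ∧ (∀ x ∈ Q, x ∈ Hs) ∧ Q.length = n)) :
    ((l : ℤ) + 1) * ((δ : ℤ) - l + 1) ≤ C.length := by
  obtain ⟨m, hm⟩ : ∃ m, m = min l (δ - l) := ⟨_, rfl⟩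
  rw [← hm] at hn
  have hm1 : 1 ≤ m := by omega
  have hml : m ≤ l := by omega
  have hmδ : 2 * m ≤ δ := by omega
  have hprod : ((l : ℤ) + 1) * ((δ : ℤ) - l + 1) = ((m : ℤ) + 1) * ((δ : ℤ) - m + 1) := by
    rcases le_total l (δ - l) with h | h
    · rw [min_eq_left h] at hm
      rw [hm]
    · rw [min_eq_right h] at hm
      have : (m : ℤ) = δ - l := by omega
      rw [this]; ring
  rw [hprod]
  have hne : ∃ v, v ∈ Hs := by
    rcases hW with ⟨-, h⟩ | ⟨-, u, -, -, h, -⟩ | ⟨h3, Q, -, h, hlen⟩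
    · exact h
    · exact ⟨u, h⟩
    · rcases Q with _ | ⟨a, Q⟩
      · simp at hlen; omega
      · exact ⟨a, h a (by simp)⟩
  by_cases hg1 : Good G Hs (δ - m - 1)
  · have h := lemG (ν := m + 1) hC hH (fun Ω h1 h2 => by have := hκ Ω h1 h2; omega) (by omega) hg1
    have h2 : δ - m - 1 + 2 = δ - m + 1 := by omega
    rw [h2] at h
    have h3 : ((m + 1 : ℕ) : ℤ) * ((δ - m + 1 : ℕ) : ℤ) ≤ C.length := by exact_mod_cast h
    have h4 : ((δ - m + 1 : ℕ) : ℤ) = (δ : ℤ) - m + 1 := by omega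
    rw [h4] at h3
    push_cast at h3
    exact h3
  by_cases hg2 : Good G Hs (m - 1)
  · have hex : ∃ k, ¬ Good G Hs (m - 1 + k) := by
      refine ⟨δ - m - 1 - (m - 1), ?_⟩
      have : m - 1 + (δ - m - 1 - (m - 1)) = δ - m - 1 := by omega
      rw [this]; exact hg1
    have hf1 := Nat.find_spec hex
    have hf2 : ∀ k < Nat.find hex, Good G Hs (m - 1 + k) := fun k hk => by
      have := Nat.find_min hex hk
      exact not_not.mp this
    have hf3 : Nat.find hex ≤ δ - m - 1 - (m - 1) := Nat.find_min' hex (by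
      have : m - 1 + (δ - m - 1 - (m - 1)) = δ - m - 1 := by omega
      rw [this]; exact hg1)
    generalize Nat.find hex = k at hf1 hf2 hf3
    rcases k with _ | k
    · exact absurd hg2 hf1
    obtain ⟨d, hd⟩ : ∃ d, d = m - 1 + k := ⟨_, rfl⟩
    have hgd : Good G Hs d := hd ▸ hf2 k (by omega)
    have hngd : ¬ Good G Hs (d + 1) := by rw [hd]; exact hf1
    have h := lemG (ν := δ - d) hC hH (fun Ω h1 h2 => by
      obtain ⟨x, hx, hxd⟩ := lemD (by omega) hngd h2 h1
      have h3 := dO_univ_le (G := G) (Ω := Ω) (x := x) (S := NB G Ω) (fun y hy hxy =>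
        mem_NB.mpr ⟨hy, x, hx, hxy.symm⟩)
      have h4 := hδ x
      omega) (by omega) hgd
    have h3 : ((δ - d : ℕ) : ℤ) * ((d + 2 : ℕ) : ℤ) ≤ C.length := by exact_mod_cast h
    have h4 : ((δ - d : ℕ) : ℤ) = (δ : ℤ) - d := by omega
    rw [h4] at h3
    push_cast at h3
    have h5 : (0 : ℤ) ≤ (d : ℤ) - m + 1 := by omega
    have h6 : (0 : ℤ) ≤ (δ : ℤ) - m - 1 - d := by omega
    nlinarith [mul_nonneg h5 h6]
  have hm2 : 2 ≤ m := by
    by_contra hlt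
    have : m - 1 = 0 := by omega
    rw [this] at hg2
    obtain ⟨v, hv⟩ := hne
    refine hg2 ⟨{v}, by simpa using hv, by simp, ?_⟩
    intro a ha b hb hab
    simp at ha hb
    exact absurd (ha.trans hb.symm) hab
  have hm3 : 3 ≤ m := by
    by_contra hlt
    have h2 : m - 1 = 1 := by omega
    rw [h2] at hg2
    rcases hW with ⟨h, -⟩ | ⟨-, u, v, huv, hu, hv⟩ | ⟨h3, Q, hQ, h, hlen⟩
    · omega
    · obtain ⟨x, hx, hxd⟩ := lemD (Ω := {u, v}) le_rfl hg2 (by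
        intro y hy
        simp at hy
        rcases hy with rfl | rfl <;> assumption) (by simp)
      unfold dO at hxd
      simp [Finset.filter_eq_empty_iff] at hxd
      simp at hx
      rcases hx with rfl | rfl
      · exact hxd.2 huv
      · exact hxd.1 huv.symm
    · exact hg2 (Good.of_cyc hQ h (fun y hy z hz hyz => pn_long hQ (by omega) hy hz hyz))
  obtain ⟨Q, hQ⟩ : ∃ Q, IsCyc G Q ∧ (∀ x ∈ Q, x ∈ Hs) ∧ m ≤ Q.length := by
    rcases hW with ⟨h, -⟩ | ⟨h, -⟩ | ⟨h3, Q, hQ, h, hlen⟩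
    · omega
    · omega
    · exact ⟨Q, hQ, h, by omega⟩
  exact case3 hC hH hδ hm3 hmδ hg2 ⟨Q, hQ⟩

theorem conn {G : SimpleGraph V} {k : ℕ} (hk : ∀ S : Finset V, S.card < k →
    (G.induce ((↑S : Set V)ᶜ)).Connected) {Ω : Finset V} (hne : Ω.Nonempty) {w : V}
    (hw : w ∉ Ω) (hw2 : w ∉ NB G Ω) : k ≤ (NB G Ω).card := by
  by_contra hlt
  have hc := hk (NB G Ω) (by omega)
  obtain ⟨x, hx⟩ := hne
  have hxN : x ∉ NB G Ω := fun h => (mem_NB.mp h).1 hx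
  obtain ⟨p⟩ := hc.preconnected ⟨x, by simpa using hxN⟩ ⟨w, by simpa using hw2⟩
  have key : ∀ (a b : ((↑(NB G Ω) : Set V)ᶜ : Set V))
      (q : (G.induce ((↑(NB G Ω) : Set V)ᶜ)).Walk a b), (a : V) ∈ Ω → (b : V) ∈ Ω := by
    intro a b q
    induction q with
    | nil => exact id
    | @cons a b c h q ih =>
      intro ha
      apply ih
      by_contra hb
      have h1 : G.Adj a b := h
      exact b.2 (by simpa using mem_NB.mpr ⟨hb, a, ha, h1.symm⟩)
  exact hw (key _ _ p hx)

theorem long_cyc {G : SimpleGraph V} {C : List V} {δ : ℕ} (hC : MaxCyc G (fun _ => True) C)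
    (hδ : ∀ v, δ ≤ dO G Finset.univ v) (h2 : 2 ≤ δ) : δ + 1 ≤ C.length := by
  obtain ⟨l, ⟨⟨a, b, hP⟩, hd⟩, hmax⟩ := exists_longest
    (p := fun l : List V => (∃ a b, P G a b l) ∧ l.Nodup) (N := (Finset.univ : Finset V).card)
    (by
      obtain ⟨_, _, a, b, h, _⟩ := hC.1
      exact ⟨[a], ⟨a, a, P.single G a⟩, by simp⟩)
    (fun l hl => length_le_of_sub hl.2 (by simp))
  have hin : ∀ x, G.Adj b x → x ∈ l := by
    intro x hx
    by_contra hxl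
    have := hmax (l ++ [x]) ⟨⟨a, x, hP.concat hx⟩, by
      rw [List.nodup_append]; refine ⟨hd, by simp, ?_⟩
      intro y hy z hz
      simp at hz
      rintro rfl
      exact hxl (hz ▸ hy)⟩
    simp at this
  have hex : ∃ x ∈ l, G.Adj b x := by
    have := hδ b
    have h3 : 0 < dO G Finset.univ b := by omega
    obtain ⟨x, hx⟩ := Finset.card_pos.mp h3
    simp at hx
    exact ⟨x, hin x hx, hx⟩
  obtain ⟨A1, p, A2, rfl, hp, hA1⟩ := firstOcc (fun x => G.Adj b x) l hex
  have hPr : P G p b (p :: A2) := hP.right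
  have hd2 : (p :: A2).Nodup := hd.of_append_right
  have hbm : b ∈ p :: A2 := hPr.last_mem
  have hcard : δ + 1 ≤ (p :: A2).length := by
    have h4 : dO G Finset.univ b ≤ ((p :: A2).toFinset.erase b).card := by
      apply Finset.card_le_card
      intro x hx
      simp at hx
      have h5 := hin x hx
      rw [List.mem_append] at h5
      rcases h5 with h5 | h5
      · exact absurd hx (hA1 x h5)
      · rw [Finset.mem_erase]
        exact ⟨hx.ne', by simpa using h5⟩
    rw [Finset.card_erase_of_mem (by simpa using hbm), List.toFinset_card_of_nodup hd2] at h4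
    have := hδ b
    omega
  have := hC.2.2 _ (IsCyc.of_path hPr hd2 (by omega) hp) (by simp)
  omega

theorem walk_P {G : SimpleGraph V} {u v : V} (p : G.Walk u v) : P G u v p.support := by
  induction p with
  | nil => exact P.single G _
  | cons h p ih => rw [Walk.support_cons]; exact ih.cons h

theorem P_walk {G : SimpleGraph V} (l : List V) : ∀ {u v : V}, P G u v l →
    ∃ p : G.Walk u v, p.support = l := by
  induction l with
  | nil => intro u v h; simp [P] at h
  | cons a l ih =>
    intro u v h
    have ha : a = u := by simpa using h.2.1
    subst ha
    rcases l with _ | ⟨b, l⟩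
    · have hv : a = v := by simpa using h.2.2
      subst hv
      exact ⟨Walk.nil, rfl⟩
    · have h1 : G.Adj a b := by have := h.1; simp at this; exact this.1
      have h2 : P G b v (b :: l) := by
        refine ⟨by have := h.1; simp at this; exact this.2, rfl, by have := h.2.2; simpa using this⟩
      obtain ⟨p, hp⟩ := ih h2
      exact ⟨Walk.cons h1 p, by simp [hp]⟩

theorem cyc_of_walk {G : SimpleGraph V} {v : V} (w : G.Walk v v) (hw : w.IsCycle) :
    ∃ Q, IsCyc G Q ∧ Q.length = w.length ∧ ∀ x, x ∈ Q ↔ x ∈ w.support := by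
  rcases w with _ | ⟨h, p⟩
  · exact absurd hw Walk.IsCycle.not_of_nil
  · have h3 := hw.three_le_length
    have hp := (Walk.cons_isCycle_iff p h).mp hw
    refine ⟨p.support, IsCyc.of_path (walk_P p) hp.1.support_nodup ?_ h, ?_, ?_⟩
    · simpa using h3
    · simp
    · intro x
      simp only [Walk.support_cons, List.mem_cons]
      constructor
      · exact Or.inr
      · rintro (rfl | h)
        · exact p.end_mem_support
        · exact h

theorem walk_of_cyc {G : SimpleGraph V} {Q : List V} (hQ : IsCyc G Q) :
    ∃ (v : V) (w : G.Walk v v), w.IsCycle ∧ w.length = Q.length := by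
  obtain ⟨h3, hd, a, b, hP, hab⟩ := hQ
  obtain ⟨p, rfl⟩ := P_walk Q hP
  refine ⟨b, Walk.cons hab p, ?_, by simp⟩
  rw [Walk.isCycle_iff_isPath_tail_and_le_length]
  refine ⟨?_, by simpa using h3⟩
  rw [Walk.isPath_def]
  simpa using hd

theorem conn_facts {G : SimpleGraph V} {l : ℕ} (hκ : l + 1 ≤ connectivity G) :
    l + 1 < Fintype.card V ∧ ∀ S : Finset V, S.card < l + 1 →
      (G.induce ((↑S : Set V)ᶜ)).Connected := by
  have hne : {k | KConnected G k}.Nonempty := by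
    by_contra h
    rw [Set.not_nonempty_iff_eq_empty] at h
    unfold connectivity at hκ
    rw [h] at hκ
    simp at hκ
  have hb : BddAbove {k | KConnected G k} := ⟨Fintype.card V, fun k hk => hk.1.le⟩
  have hmem : KConnected G (connectivity G) := Nat.sSup_mem hne hb
  exact ⟨lt_of_le_of_lt hκ hmem.1, fun S hS => hmem.2 S (by omega)⟩

end NK

theorem nikoghosyan_2009_CD' (G : SimpleGraph V) [Fintype V] [DecidableRel G.Adj]
    (l : ℕ) (hl : 1 ≤ l) (hκ : l + 1 ≤ connectivity G) :
    (circumference G : ℤ) ≥ (l + 1) * ((G.minDegree : ℤ) - l + 1) ∨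
      ∀ (v : V) (w : G.Walk v v), IsLongestCycle w →
        IsCDCycle G w (min l (G.minDegree - l)) := by
  classical
  by_contra hcon
  rw [not_or] at hcon
  obtain ⟨hc1, hc2⟩ := hcon
  apply hc1
  push Not at hc2
  obtain ⟨v, w, hw, hncd⟩ := hc2
  obtain ⟨hcard, hconn⟩ := NK.conn_facts hκ
  have hncd2 : ∃ (W : Set V) (n : ℕ), ExtCycle G W n ∧ min l (G.minDegree - l) ≤ n ∧
      ∀ x ∈ W, x ∉ w.support := by
    by_contra h
    apply hncd
    refine ⟨hw.1, fun W n h1 h2 => ?_⟩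
    by_contra h3
    push Not at h3
    exact h ⟨W, n, h1, h2, h3⟩
  obtain ⟨W, n, hE, hn, hWd⟩ := hncd2
  obtain ⟨C, hC, hCl, hCs⟩ := NK.cyc_of_walk w hw.1
  have hMax : NK.MaxCyc G (fun _ => True) C := by
    refine ⟨hC, fun _ _ => trivial, fun Q hQ _ => ?_⟩
    obtain ⟨u, w', hw', hlen⟩ := NK.walk_of_cyc hQ
    have := hw.2 u w' hw'
    omega
  have hδ : ∀ v, G.minDegree ≤ NK.dO G Finset.univ v := by
    intro v
    refine (G.minDegree_le_degree v).trans (le_of_eq ?_)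
    rw [← G.card_neighborFinset_eq_degree]
    unfold NK.dO
    congr 1
    ext x
    simp
  have hlδ : l + 1 ≤ G.minDegree := by
    haveI : Nonempty V := ⟨v⟩
    obtain ⟨u, hu⟩ := G.exists_minimal_degree_vertex
    have hN : NK.NB G {u} = G.neighborFinset u := by
      ext x
      rw [NK.mem_NB]
      simp only [Finset.mem_singleton, exists_eq_left, mem_neighborFinset]
      exact ⟨fun h => h.2.symm, fun h => ⟨h.ne', h.symm⟩⟩
    rw [hu, ← G.card_neighborFinset_eq_degree, ← hN]
    by_cases h : ∃ x, x ∉ ({u} : Finset V) ∧ x ∉ NK.NB G {u}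
    · obtain ⟨x, hx1, hx2⟩ := h
      exact NK.conn hconn (by simp) hx1 hx2
    · push Not at h
      have h2 : (Finset.univ : Finset V) ⊆ insert u (NK.NB G {u}) := by
        intro x _
        by_cases hx : x = u
        · simp [hx]
        · exact Finset.mem_insert_of_mem (h x (by simpa using hx))
      have h3 := Finset.card_le_card h2
      have h4 := Finset.card_insert_le u (NK.NB G {u})
      rw [Finset.card_univ] at h3
      omega
  have hlong := NK.long_cyc hMax hδ (by omega)
  obtain ⟨Hs, hH⟩ := NK.exists_finset (fun v => v ∉ C)
  have hκ2 : ∀ Ω : Finset V, Ω.Nonempty → Ω ⊆ Hs → l + 1 ≤ (NK.NB G Ω).card := by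
    intro Ω hne hs
    by_cases h : ∃ x ∈ C, x ∉ NK.NB G Ω
    · obtain ⟨x, hx1, hx2⟩ := h
      exact NK.conn hconn hne (fun hx => (hH x).mp (hs hx) hx1) hx2
    · push Not at h
      have := NK.length_le_of_sub hC.2.1 h
      omega
  have hmain := NK.main_list hMax hH hδ hl hlδ hκ2 hn (by
    rcases hE with ⟨h1, x, rfl⟩ | ⟨h1, x, y, hxy, rfl⟩ | ⟨h1, x, q, hq, hql, rfl⟩
    · exact Or.inl ⟨h1, x, by rw [hH, hCs]; exact hWd x (by simp)⟩
    · exact Or.inr (Or.inl ⟨h1, x, y, hxy, by rw [hH, hCs]; exact hWd x (by simp),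
        by rw [hH, hCs]; exact hWd y (by simp)⟩)
    · obtain ⟨Q, hQ, hQl, hQs⟩ := NK.cyc_of_walk q hq
      refine Or.inr (Or.inr ⟨h1, Q, hQ, fun z hz => ?_, by omega⟩)
      rw [hH, hCs]
      exact hWd z ((hQs z).mp hz))
  have hcirc : w.length ≤ circumference G :=
    le_csSup ⟨w.length, by rintro _ ⟨u, w', hw', rfl⟩; exact hw.2 u w' hw'⟩ ⟨v, w, hw.1, rfl⟩
  have : (C.length : ℤ) ≤ circumference G := by rw [hCl]; exact_mod_cast hcirc
  exact le_trans hmain this
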